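/- arXiv:2303.11468 — 7 statements merged into one kernel-verified Lean document; each statement's English description precedes it below -/
import Mathlib

section
/- Let M and N be locally compact Hausdorff topological F_q-vector spaces. Then for every continuous F_q-linear map f : N^∨ → M there exists a unique continuous F_q-linear map g : M^∨ → N such that μ(f(ν)) = ν(g(μ)) for all μ ∈ M^∨ and all ν ∈ N^∨; moreover, the assignment f ↦ g is an F_q-linear bijection from the space of continuous F_q-linear maps N^∨ → M onto the space of continuous F_q-linear maps M^∨ → N. -/
/-!
The transpose of `f : N^∨ → M` is `g μ = μ ∘ f`, read as a point of `N` through reflexivity: every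
continuous linear functional on `N^∨` is evaluation at a unique point of `N` (`exists_eval_eq`,
`eq_of_forall_dual`). If `U ≤ N` is an open subspace, then `g μ ∈ U` as soon as `μ` vanishes on
`f (U^⊥)`; since `U^⊥` is compact (`isCompact_annihilator`), this is an open condition on `μ`, so
`g` is continuous (`exists_transpose`). Exchanging `M` and `N` gives the inverse of `f ↦ g`, and
linearity follows from uniqueness.

All of this needs open subspaces to form a neighbourhood basis of `0` (`exists_open_submodule`).
Because finitely generated `Fq`-vector spaces are finite, a compact neighbourhood generates, up to a
finite subspace, a compact open subspace (`exists_compact_submodule`), which reduces the question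
to a compact space `G`. There, given a neighbourhood `V` of `0`, finitely many translates of `V`,
say `m`, cover `G`; so every finite subspace `H` of `G` meets some translate in at least `|H| / m`
points, and Bogolyubov's lemma (`bogolyubov`) puts inside `V + V - V - V` the common kernel of
`m ^ 2` characters of `H`. The number of characters does not depend on `H`, so an ultralimit over
all `H` produces a finite-index subgroup of `G` inside `V + V - V - V`
(`exists_open_addSubgroup_of_compact`); its closure is open, and stays in any closed set containing
`V + V - V - V`.
-/

open Topology

section Setup

variable (Fq : Type*) [Field Fq] [Fintype Fq] [TopologicalSpace Fq] [DiscreteTopology Fq]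

/-- A finite discrete field has continuous addition. -/
instance (priority := low) : ContinuousAdd Fq := ⟨continuous_of_discreteTopology⟩

/-- A finite discrete field has continuous (const) scalar multiplication on itself. -/
instance (priority := low) : ContinuousConstSMul Fq Fq :=
  ⟨fun _ => continuous_of_discreteTopology⟩

/-- The Pontryagin-type dual of a topological `Fq`-vector space `M`: the space of continuous
`Fq`-linear maps `M → Fq`, topologized as a subspace of `C(M, Fq)` with the compact-open
topology. -/
abbrev LinDual (M : Type*) [AddCommGroup M] [Module Fq M] [TopologicalSpace M] :=
  {φ : C(M, Fq) // IsLinearMap Fq ⇑φ}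

variable {M : Type*} [AddCommGroup M] [Module Fq M] [TopologicalSpace M]

/-- Pointwise addition on the dual. -/
instance : Add (LinDual Fq M) :=
  ⟨fun φ ψ =>
    ⟨φ.1 + ψ.1,
      { map_add := fun a b => by
          simp only [ContinuousMap.add_apply, φ.2.map_add, ψ.2.map_add]; ring
        map_smul := fun c x => by
          simp only [ContinuousMap.add_apply, φ.2.map_smul, ψ.2.map_smul, smul_eq_mul]; ring }⟩⟩

/-- Pointwise scalar multiplication on the dual. -/
instance : SMul Fq (LinDual Fq M) :=
  ⟨fun c φ =>
    ⟨c • φ.1,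
      { map_add := fun a b => by
          simp only [ContinuousMap.smul_apply, φ.2.map_add, smul_eq_mul]; ring
        map_smul := fun d x => by
          simp only [ContinuousMap.smul_apply, φ.2.map_smul, smul_eq_mul]; ring }⟩⟩

/-- Bundled continuous `Fq`-linear maps between a type with an `Fq`-action and a topological
`Fq`-vector space. -/
structure CLMap (X Y : Type*) [TopologicalSpace X] [Add X] [SMul Fq X]
    [TopologicalSpace Y] [AddCommGroup Y] [Module Fq Y] where
  toFun : X → Y
  continuous' : Continuous toFun
  map_add' : ∀ a b, toFun (a + b) = toFun a + toFun b
  map_smul' : ∀ (c : Fq) a, toFun (c • a) = c • toFun a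

variable {X Y : Type*} [TopologicalSpace X] [Add X] [SMul Fq X]
  [TopologicalSpace Y] [AddCommGroup Y] [Module Fq Y]

/-- Pointwise addition of continuous linear maps. -/
instance [ContinuousAdd Y] : Add (CLMap Fq X Y) :=
  ⟨fun f g =>
    { toFun := fun x => f.toFun x + g.toFun x
      continuous' := f.continuous'.add g.continuous'
      map_add' := fun a b => by simp only [f.map_add', g.map_add']; abel
      map_smul' := fun c a => by simp only [f.map_smul', g.map_smul', smul_add] }⟩

/-- Pointwise scalar multiplication of continuous linear maps. -/
instance [ContinuousConstSMul Fq Y] : SMul Fq (CLMap Fq X Y) :=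
  ⟨fun c f =>
    { toFun := fun x => c • f.toFun x
      continuous' := f.continuous'.const_smul c
      map_add' := fun a b => by simp only [f.map_add', smul_add]
      map_smul' := fun d a => by
        simp only [f.map_smul', smul_smul, mul_comm] }⟩

end Setup

/-! ### Small open subspaces -/

open Finset in
/-- Bogolyubov's lemma. If `A` has density at least `1 / m` in the finite abelian group `H`, then
`A + A - A - A` contains the common kernel of at most `m ^ 2` characters: those at which the
Fourier coefficient of the indicator function of `A` is large. The bound does not depend on
`H`. -/
theorem bogolyubov {H : Type*} [AddCommGroup H] [Fintype H] (A : Finset H) (m : ℕ)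
    (hm : Fintype.card H ≤ m * A.card) :
    ∃ S : Finset (AddChar H ℂ), S.card ≤ m ^ 2 ∧ ∀ x, (∀ χ ∈ S, χ x = 1) →
      ∃ a ∈ A, ∃ b ∈ A, ∃ c ∈ A, ∃ d ∈ A, x = a + b - (c + d) := by
  classical
  have hH : 0 < Fintype.card H := Fintype.card_pos
  have hA : 0 < A.card := Nat.pos_of_ne_zero fun h => by simp [h] at hm
  have hm0 : 0 < m := Nat.pos_of_ne_zero fun h => by simp [h] at hm
  set F : AddChar H ℂ → ℂ := fun χ => ∑ a ∈ A, χ a with hF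
  have hconj : ∀ χ, (starRingEnd ℂ) (F χ) = ∑ a ∈ A, χ (-a) := by
    intro χ; simp [hF, AddChar.map_neg_eq_conj]
  have hnorm : ∀ χ, ((‖F χ‖ ^ 2 : ℝ) : ℂ) = ∑ a ∈ A, ∑ c ∈ A, χ (a - c) := by
    intro χ
    push_cast
    rw [← Complex.mul_conj', hconj, sum_mul_sum]
    simp_rw [sub_eq_add_neg, AddChar.map_add_eq_mul]
  have hpars : ∑ χ, ‖F χ‖ ^ 2 = (Fintype.card H * A.card : ℝ) := by
    have : ((∑ χ, ‖F χ‖ ^ 2 : ℝ) : ℂ) = ((Fintype.card H * A.card : ℝ) : ℂ) := by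
      rw [Complex.ofReal_sum]
      simp_rw [hnorm]
      rw [sum_comm]
      simp_rw [sum_comm (s := univ), AddChar.sum_apply_eq_ite, sub_eq_zero]
      simp [mul_comm]
    exact_mod_cast this
  have hF0 : ‖F 0‖ = A.card := by simp [hF]
  have hAR : (0 : ℝ) < A.card := by exact_mod_cast hA
  have hmR : (1 : ℝ) ≤ m := by exact_mod_cast hm0
  have hHm : (Fintype.card H : ℝ) ≤ m * A.card := by exact_mod_cast hm
  -- the large spectrum of `A`
  set S : Finset (AddChar H ℂ) := univ.filter fun χ => (A.card : ℝ) ^ 2 ≤ m * ‖F χ‖ ^ 2 with hS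
  have h0S : (0 : AddChar H ℂ) ∈ S := by
    simp only [hS, mem_filter, mem_univ, true_and, hF0]
    nlinarith [sq_nonneg (A.card : ℝ)]
  refine ⟨S, ?_, ?_⟩
  · have h1 : (S.card : ℝ) * (A.card : ℝ) ^ 2 ≤ m * (Fintype.card H * A.card) := by
      rw [← hpars, mul_sum, ← nsmul_eq_mul, ← sum_const]
      calc ∑ χ ∈ S, (A.card : ℝ) ^ 2 ≤ ∑ χ ∈ S, m * ‖F χ‖ ^ 2 :=
            sum_le_sum fun χ hχ => (mem_filter.1 hχ).2
        _ ≤ _ := sum_le_sum_of_subset_of_nonneg (subset_univ _) fun _ _ _ => by positivity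
    have h2 : (S.card : ℝ) * (A.card : ℝ) ^ 2 ≤ (m : ℝ) ^ 2 * (A.card : ℝ) ^ 2 := by
      refine h1.trans ?_
      have := mul_le_mul_of_nonneg_left hHm (by positivity : (0 : ℝ) ≤ m * A.card)
      nlinarith
    exact_mod_cast le_of_mul_le_mul_right h2 (by positivity)
  · -- if `x` had no representation, the trivial character, contributing `|A| ^ 4`, would be
    -- outweighed by the characters outside `S`, contributing less than `|A| ^ 4` by Parseval
    intro x hx
    by_contra hno
    push Not at hno
    -- the Fourier expansion of the number of representations of `x`
    have hzero : ∑ χ, ((‖F χ‖ ^ 2 : ℝ) : ℂ) * ((‖F χ‖ ^ 2 : ℝ) : ℂ) * χ (-x) = 0 := by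
      simp_rw [hnorm, sum_mul_sum, sum_mul, ← AddChar.map_add_eq_mul]
      rw [sum_comm]
      refine sum_eq_zero fun a ha => ?_
      rw [sum_comm]
      refine sum_eq_zero fun b hb => ?_
      rw [sum_comm]
      refine sum_eq_zero fun c hc => ?_
      rw [sum_comm]
      refine sum_eq_zero fun d hd => ?_
      rw [AddChar.sum_apply_eq_ite, if_neg]
      intro h
      refine hno a ha b hb c hc d hd ?_
      rw [← sub_eq_zero, ← neg_eq_zero, ← h]
      abel
    have hre : ∑ χ, ‖F χ‖ ^ 4 * (χ (-x)).re = 0 := by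
      have := congrArg Complex.re hzero
      rw [Complex.re_sum, Complex.zero_re] at this
      rw [← this]
      refine sum_congr rfl fun χ _ => ?_
      rw [← Complex.ofReal_mul, Complex.re_ofReal_mul]
      ring
    have hone : ∀ χ ∈ S, (χ (-x)).re = 1 := by
      intro χ hχ
      rw [AddChar.map_neg_eq_conj, hx χ hχ]; simp
    have hge : ∀ χ : AddChar H ℂ, -1 ≤ (χ (-x)).re := by
      intro χ
      have h1 : ‖χ (-x)‖ = 1 := AddChar.norm_apply χ (-x)
      have := Complex.abs_re_le_norm (χ (-x))
      rw [h1] at this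
      exact (abs_le.1 this).1
    have hsplit := sum_filter_add_sum_filter_not univ
      (fun χ => (A.card : ℝ) ^ 2 ≤ m * ‖F χ‖ ^ 2) (fun χ => ‖F χ‖ ^ 4 * (χ (-x)).re)
    have hsplit2 := sum_filter_add_sum_filter_not univ
      (fun χ => (A.card : ℝ) ^ 2 ≤ m * ‖F χ‖ ^ 2) (fun χ => ‖F χ‖ ^ 2)
    rw [hre] at hsplit
    rw [hpars] at hsplit2
    rw [← hS] at hsplit hsplit2
    have hS4 : (A.card : ℝ) ^ 4 ≤ ∑ χ ∈ S, ‖F χ‖ ^ 4 * (χ (-x)).re := by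
      rw [sum_congr rfl fun χ hχ => by rw [hone χ hχ, mul_one], ← hF0]
      exact single_le_sum (f := fun χ => ‖F χ‖ ^ 4) (fun _ _ => by positivity) h0S
    have hS2 : (A.card : ℝ) ^ 2 ≤ ∑ χ ∈ S, ‖F χ‖ ^ 2 := by
      rw [← hF0]
      exact single_le_sum (f := fun χ => ‖F χ‖ ^ 2) (fun _ _ => by positivity) h0S
    set R := univ.filter fun χ => ¬ (A.card : ℝ) ^ 2 ≤ m * ‖F χ‖ ^ 2 with hR
    have hRle : - ((A.card : ℝ) ^ 2 * ∑ χ ∈ R, ‖F χ‖ ^ 2)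
        ≤ m * ∑ χ ∈ R, ‖F χ‖ ^ 4 * (χ (-x)).re := by
      rw [mul_sum, mul_sum, ← sum_neg_distrib]
      refine sum_le_sum fun χ hχ => ?_
      have h1 := (mem_filter.1 hχ).2
      push Not at h1
      have h2 := mul_le_mul_of_nonneg_left h1.le (sq_nonneg ‖F χ‖)
      have h3 := mul_le_mul_of_nonneg_left (hge χ) (by positivity : 0 ≤ m * ‖F χ‖ ^ 4)
      nlinarith
    have e1 : (Fintype.card H * A.card : ℝ) ≤ m * A.card ^ 2 := by nlinarith
    have e2 : ∑ χ ∈ R, ‖F χ‖ ^ 2 ≤ m * (A.card : ℝ) ^ 2 - (A.card : ℝ) ^ 2 := by linarith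
    have e3 := mul_le_mul_of_nonneg_left e2 (sq_nonneg (A.card : ℝ))
    have e4 := mul_le_mul_of_nonneg_left hS4 (by positivity : (0 : ℝ) ≤ m)
    have e5 : (0 : ℝ) < A.card ^ 4 := by positivity
    have e6 : m * ∑ χ ∈ S, ‖F χ‖ ^ 4 * (χ (-x)).re
      + m * ∑ χ ∈ R, ‖F χ‖ ^ 4 * (χ (-x)).re = 0 := by rw [← mul_add, hsplit, mul_zero]
    nlinarith

/-- In a compact `k`-vector space over a finite field `k`, every neighbourhood of `0` contains an
open subgroup. Bogolyubov's lemma gives, on every finite subspace, a homomorphism to a fixed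
finite group whose kernel lies in the neighbourhood; an ultralimit glues these to a homomorphism
on the whole space, with kernel of finite index. -/
theorem exists_open_addSubgroup_of_compact {k G : Type*} [Field k] [Fintype k] [AddCommGroup G]
    [Module k G] [TopologicalSpace G] [IsTopologicalAddGroup G] [CompactSpace G]
    {W : Set G} (hW : W ∈ 𝓝 (0 : G)) :
    ∃ B : AddSubgroup G, IsOpen (B : Set G) ∧ (B : Set G) ⊆ W := by
  classical
  obtain ⟨W', hW', hW'c, hW'W⟩ := exists_mem_nhds_isClosed_subset hW
  obtain ⟨V₁, hV₁, hV₁W⟩ := exists_nhds_half_neg hW'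
  obtain ⟨V, hV, hVV₁⟩ := exists_nhds_zero_half hV₁
  obtain ⟨T, -, hT⟩ := (isCompact_univ (X := G)).elim_nhds_subcover (fun t => {y | y - t ∈ V})
    fun t _ => by
      have : Filter.Tendsto (fun y => y - t) (𝓝 t) (𝓝 0) := by
        simpa using (continuous_sub_right t).tendsto t
      exact this hV
  set m := T.card with hmdef
  set n := Fintype.card k with hn
  have : NeZero n := ⟨Fintype.card_ne_zero⟩
  have hnk : ∀ x : G, n • x = 0 := fun x => by
    rw [← Nat.cast_smul_eq_nsmul k, hn, Nat.cast_card_eq_zero, zero_smul]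
  -- a bounded number of characters on each finite subgroup cuts out a part of `W'`
  have key : ∀ F : Finset G, ∃ Φ : G → (Fin (m ^ 2) → rootsOfUnity n ℂ),
      (∀ x ∈ Submodule.span k (F : Set G), ∀ y ∈ Submodule.span k (F : Set G),
        Φ (x + y) = Φ x * Φ y) ∧
      ∀ x ∈ Submodule.span k (F : Set G), Φ x = 1 → x ∈ W' := by
    intro F
    set H := Submodule.span k (F : Set G) with hH
    have : Module.Finite k H := inferInstance
    have : Finite H := Module.finite_of_finite k
    have := Fintype.ofFinite H
    -- pigeonhole: some translate `t + V` contains at least the `m`-th part of `H`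
    obtain ⟨t, htA⟩ : ∃ t : G, Fintype.card H ≤
        m * (Finset.univ.filter fun h : H => (h : G) - t ∈ V).card := by
      by_contra hno
      push Not at hno
      have hcov : (Finset.univ : Finset H) ⊆
          T.biUnion fun t => Finset.univ.filter fun h : H => (h : G) - t ∈ V := by
        intro h _
        have := hT (Set.mem_univ (h : G))
        simpa using this
      have hTne : T.Nonempty := by
        rw [Finset.nonempty_iff_ne_empty]; rintro rfl
        simpa using hT (Set.mem_univ (0 : G))
      have h1 := (Finset.card_le_card hcov).trans Finset.card_biUnion_le
      have h2 : m * Fintype.card H ≤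
          ∑ t ∈ T, m * (Finset.univ.filter fun h : H => (h : G) - t ∈ V).card := by
        rw [← Finset.mul_sum]; exact Nat.mul_le_mul_left _ h1
      have h3 := Finset.sum_lt_sum_of_nonempty hTne fun t _ => hno t
      rw [Finset.sum_const, smul_eq_mul, ← hmdef] at h3
      exact absurd (h2.trans_lt h3) (by simp)
    obtain ⟨S, hSm, hS⟩ := bogolyubov _ m htA
    obtain ⟨e, he⟩ : ∃ e : Fin (m ^ 2) → AddChar H ℂ, ∀ χ ∈ S, ∃ i, e i = χ := by
      refine ⟨fun i => if h : (i : ℕ) < S.card then S.equivFin.symm ⟨i, h⟩ else 1, fun χ hχ => ?_⟩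
      refine ⟨⟨S.equivFin ⟨χ, hχ⟩, (Fin.is_lt _).trans_le hSm⟩, ?_⟩
      simp
    have hpow : ∀ (χ : AddChar H ℂ) (x : H), χ x ^ n = 1 := fun χ x => by
      rw [← AddChar.map_nsmul_eq_pow, show n • x = 0 from Subtype.ext (by simpa using hnk x),
        AddChar.map_zero_eq_one]
    refine ⟨fun x i => if hx : x ∈ H then rootsOfUnity.mkOfPowEq (e i ⟨x, hx⟩) (hpow _ _) else 1,
      ?_, ?_⟩
    · intro x hx y hy
      ext i
      simp [hx, hy, H.add_mem hx hy, ← AddChar.map_add_eq_mul]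
    · intro x hx h1
      obtain ⟨a, ha, b, hb, c, hc, d, hd, hxe⟩ := hS ⟨x, hx⟩ fun χ hχ => by
        obtain ⟨i, rfl⟩ := he χ hχ
        have := congrArg (fun z : rootsOfUnity n ℂ => ((z : ℂˣ) : ℂ)) (congrFun h1 i)
        simpa [hx] using this
      simp only [Finset.mem_filter, Finset.mem_univ, true_and] at ha hb hc hd
      have hxe' : x = a + b - (c + d) := congrArg Subtype.val hxe
      have := hV₁W _ (hVV₁ _ ha _ hb) _ (hVV₁ _ hc _ hd)
      convert this using 1
      rw [hxe']; abel
  choose Φ hΦadd hΦW using key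
  -- pass to the limit along an ultrafilter finer than `atTop` on the finite subsets of `G`
  let 𝒰 : Ultrafilter (Finset G) := Ultrafilter.of Filter.atTop
  have hmem : ∀ x : G, ∀ᶠ F : Finset G in 𝒰, x ∈ Submodule.span k (F : Set G) := fun x =>
    Ultrafilter.of_le Filter.atTop <| by
      filter_upwards [Filter.eventually_ge_atTop {x}] with F hF
      exact Submodule.subset_span (hF (by simp))
  have hlim : ∀ x : G, ∃ q, ∀ᶠ F : Finset G in 𝒰, Φ F x = q := fun x => by
    have := (Ultrafilter.eventually_exists_iff (f := 𝒰) (P := fun q F => Φ F x = q)).1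
      (Filter.Eventually.of_forall fun F => ⟨_, rfl⟩)
    exact this
  choose Ψ hΨ using hlim
  let ψ : G →+ Additive (Fin (m ^ 2) → rootsOfUnity n ℂ) :=
    AddMonoidHom.mk' (fun x => Additive.ofMul (Ψ x)) fun x y => by
      obtain ⟨F, h1, h2, h3, h4, h5⟩ := ((hΨ (x + y)).and ((hΨ x).and ((hΨ y).and
        ((hmem x).and (hmem y))))).exists
      rw [← ofMul_mul, ← h1, ← h2, ← h3, hΦadd F x h4 y h5]
  have hker : (ψ.ker : Set G) ⊆ W' := by
    intro x hx
    have hx' : Ψ x = 1 := hx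
    obtain ⟨F, h1, h2⟩ := ((hΨ x).and (hmem x)).exists
    exact hΦW F x h2 (h1.trans hx')
  have : Finite ψ.range := inferInstance
  have hfi : ψ.ker.FiniteIndex := AddSubgroup.finiteIndex_ker ψ
  have : ψ.ker.topologicalClosure.FiniteIndex :=
    AddSubgroup.finiteIndex_of_le ψ.ker.le_topologicalClosure
  exact ⟨ψ.ker.topologicalClosure, AddSubgroup.isOpen_of_isClosed_of_finiteIndex _
    ψ.ker.isClosed_topologicalClosure, (closure_minimal hker hW'c).trans hW'W⟩

section

set_option linter.unusedSectionVars false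

open scoped Pointwise

variable {Fq : Type*} [Field Fq] [Fintype Fq] [TopologicalSpace Fq] [DiscreteTopology Fq]
  {M : Type*} [AddCommGroup M] [Module Fq M] [TopologicalSpace M] [ContinuousAdd M]
  [ContinuousSMul Fq M]

variable (Fq) in
/-- Every compact set lies in a compact open subspace: finitely generated subspaces are finite, so
if `L + L ⊆ F + L` with `F` finite, then `span F + L` is still compact. -/
theorem exists_compact_submodule [LocallyCompactSpace M] {K : Set M} (hK : IsCompact K) :
    ∃ C : Submodule Fq M, IsCompact (C : Set M) ∧ IsOpen (C : Set M) ∧ K ⊆ C := by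
  classical
  have : ContinuousNeg M := ContinuousNeg.of_continuousConstSMul Fq M
  have : IsTopologicalAddGroup M := ⟨⟩
  obtain ⟨K₀, hK₀, hK₀n⟩ := exists_compact_mem_nhds (0 : M)
  -- a compact neighbourhood of `0` that is stable under scalars
  let L : Set M := ⋃ c : Fq, (fun x => c • x) '' (K ∪ K₀)
  have hL : IsCompact L :=
    isCompact_iUnion fun c => (hK.union hK₀).image (continuous_const_smul c)
  have hsub : K ∪ K₀ ⊆ L := fun x hx => Set.mem_iUnion.2 ⟨1, x, hx, one_smul _ _⟩
  have hLn : L ∈ 𝓝 (0 : M) :=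
    Filter.mem_of_superset hK₀n (Set.subset_union_right.trans hsub)
  have hLs : ∀ (c : Fq), ∀ x ∈ L, c • x ∈ L := by
    rintro c x hx
    obtain ⟨d, y, hy, rfl⟩ := Set.mem_iUnion.1 hx
    exact Set.mem_iUnion.2 ⟨c * d, y, hy, mul_smul _ _ _⟩
  obtain ⟨F, -, hF⟩ := (hL.add hL).elim_nhds_subcover (fun t => {y | y - t ∈ L})
    fun t _ => by
      have : Filter.Tendsto (fun y => y - t) (𝓝 t) (𝓝 0) := by
        simpa using (continuous_sub_right t).tendsto t
      exact this hLn
  set S := Submodule.span Fq (F : Set M) with hS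
  have : Finite S := Module.finite_of_finite Fq
  -- `L + L ⊆ F + L`, so `S + L` is closed under addition
  let C : Submodule Fq M :=
    { carrier := (S : Set M) + L
      zero_mem' := ⟨0, S.zero_mem, 0, mem_of_mem_nhds hLn, add_zero _⟩
      add_mem' := by
        rintro _ _ ⟨s, hs, l, hl, rfl⟩ ⟨s', hs', l', hl', rfl⟩
        obtain ⟨t, ht, htl⟩ := Set.mem_iUnion₂.1 (hF (Set.add_mem_add hl hl'))
        refine ⟨s + s' + t, S.add_mem (S.add_mem hs hs') (Submodule.subset_span ht), _, htl, ?_⟩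
        simp only
        abel
      smul_mem' := by
        rintro c _ ⟨s, hs, l, hl, rfl⟩
        exact ⟨c • s, S.smul_mem c hs, c • l, hLs c l hl, (smul_add _ _ _).symm⟩ }
  have hLC : L ⊆ C := fun l hl => ⟨0, S.zero_mem, l, hl, zero_add _⟩
  refine ⟨C, (Set.toFinite (S : Set M)).isCompact.add hL, ?_,
    Set.subset_union_left.trans (hsub.trans hLC)⟩
  exact C.toAddSubgroup.isOpen_of_mem_nhds (g := 0) (Filter.mem_of_superset hLn hLC)

variable (Fq) in
/-- The topology of a locally compact `Fq`-vector space is linear: open subspaces form a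
neighbourhood basis of `0`. In particular such a space is totally disconnected when it is
Hausdorff. -/
theorem exists_open_submodule [LocallyCompactSpace M] {W : Set M} (hW : W ∈ 𝓝 (0 : M)) :
    ∃ U : Submodule Fq M, IsOpen (U : Set M) ∧ (U : Set M) ⊆ W := by
  have : ContinuousNeg M := ContinuousNeg.of_continuousConstSMul Fq M
  have : IsTopologicalAddGroup M := ⟨⟩
  obtain ⟨C, hC, hCo, -⟩ := exists_compact_submodule Fq (isCompact_empty (X := M))
  have : CompactSpace C := isCompact_iff_compactSpace.1 hC
  have : IsTopologicalAddGroup C := inferInstanceAs (IsTopologicalAddGroup C.toAddSubgroup)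
  obtain ⟨B, hBo, hBW⟩ := exists_open_addSubgroup_of_compact (k := Fq) (G := C)
    (W := Subtype.val ⁻¹' W) (continuous_subtype_val.continuousAt.preimage_mem_nhds (by simpa))
  have hDo : IsOpen ((fun x : C => (x : M)) '' (B : Set C)) :=
    hCo.isOpenEmbedding_subtypeVal.isOpenMap _ hBo
  let D : AddSubgroup M := B.map C.subtype.toAddMonoidHom
  have hD : (D : Set M) = (fun x : C => (x : M)) '' (B : Set C) := rfl
  -- the largest subspace contained in `D`
  let U : Submodule Fq M :=
    { carrier := {x | ∀ c : Fq, c • x ∈ D}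
      zero_mem' := fun c => by simp [D.zero_mem]
      add_mem' := fun hx hy c => by rw [smul_add]; exact D.add_mem (hx c) (hy c)
      smul_mem' := fun d x hx c => by rw [smul_smul]; exact hx _ }
  refine ⟨U, ?_, fun x hx => ?_⟩
  · have : (U : Set M) = ⋂ c : Fq, (fun x => c • x) ⁻¹' (D : Set M) := by
      ext x; simp [U]
    rw [this]
    exact isOpen_iInter_of_finite fun c => (hD ▸ hDo).preimage (continuous_const_smul c)
  · have h1 : x ∈ (D : Set M) := by simpa using hx 1
    rw [hD] at h1
    obtain ⟨y, hy, rfl⟩ := h1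
    exact hBW hy

/-! ### Duality -/

/-- An algebraic linear functional vanishing on an open subspace, as an element of the dual. -/
def dualOfOpen (U : Submodule Fq M) (hU : IsOpen (U : Set M)) (φ : M →ₗ[Fq] Fq)
    (h : ∀ x ∈ U, φ x = 0) : LinDual Fq M :=
  ⟨⟨φ, by
    have : ContinuousNeg M := ContinuousNeg.of_continuousConstSMul Fq M
    have : IsTopologicalAddGroup M := ⟨⟩
    refine continuous_of_continuousAt_zero φ ?_
    refine (continuousAt_const (y := (0 : Fq))).congr ?_
    filter_upwards [hU.mem_nhds U.zero_mem] with x hx using (h x hx).symm⟩, φ.isLinear⟩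

theorem exists_dual_ne_zero (U : Submodule Fq M) (hU : IsOpen (U : Set M)) {x : M} (hx : x ∉ U) :
    ∃ ν : LinDual Fq M, (∀ y ∈ U, ν.1 y = 0) ∧ ν.1 x ≠ 0 := by
  obtain ⟨φ, h1, h2⟩ := Submodule.exists_le_ker_of_notMem hx
  exact ⟨dualOfOpen U hU φ fun y hy => h2 hy, fun y hy => h2 hy, h1⟩

theorem eq_of_forall_dual [LocallyCompactSpace M] [T2Space M] {x y : M}
    (h : ∀ ν : LinDual Fq M, ν.1 x = ν.1 y) : x = y := by
  by_contra hne
  have hxy : x - y ≠ 0 := sub_ne_zero.2 hne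
  obtain ⟨U, hU, hUW⟩ := exists_open_submodule Fq (isOpen_compl_singleton.mem_nhds hxy.symm)
  obtain ⟨ν, -, hν⟩ := exists_dual_ne_zero U hU (x := x - y) fun hmem => hUW hmem rfl
  exact hν (by rw [ν.2.map_sub, h, sub_self])

/-- The annihilator `U^⊥` of an open subspace is compact: on it the compact-open topology is the
topology of pointwise convergence. -/
theorem isCompact_annihilator (U : Submodule Fq M) (hU : IsOpen (U : Set M)) :
    IsCompact {ν : LinDual Fq M | ∀ x ∈ U, ν.1 x = 0} := by
  have : ContinuousNeg M := ContinuousNeg.of_continuousConstSMul Fq M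
  have : IsTopologicalAddGroup M := ⟨⟩
  let P : Set (M → Fq) := {φ | IsLinearMap Fq φ ∧ ∀ x ∈ U, φ x = 0}
  have hP : IsCompact P := by
    refine IsClosed.isCompact ?_
    have : P = (⋂ (x : M) (y : M), {φ | φ (x + y) = φ x + φ y}) ∩
        (⋂ (c : Fq) (x : M), {φ | φ (c • x) = c • φ x}) ∩ ⋂ x ∈ U, {φ | φ x = 0} := by
      ext φ
      simp only [P, Set.mem_ofPred_eq, Set.mem_inter_iff, Set.mem_iInter]
      exact and_congr_left fun _ => ⟨fun h => ⟨h.1, h.2⟩, fun h => ⟨h.1, h.2⟩⟩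
    rw [this]
    refine ((isClosed_iInter fun x => isClosed_iInter fun y => isClosed_eq (by fun_prop)
      (by fun_prop)).inter (isClosed_iInter fun c => isClosed_iInter fun x => isClosed_eq
      (by fun_prop) ?_)).inter
      (isClosed_iInter fun x => isClosed_iInter fun _ => isClosed_eq (by fun_prop) (by fun_prop))
    exact (continuous_of_discreteTopology (f := fun z : Fq => c • z)).comp (continuous_apply x)
  have : CompactSpace P := isCompact_iff_compactSpace.1 hP
  let s : P → LinDual Fq M := fun p => dualOfOpen U hU p.2.1.mk' p.2.2
  have hs : Continuous s := by
    refine Continuous.subtype_mk (ContinuousMap.continuous_compactOpen.2 fun K hK O hO => ?_) _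
    -- a compact set meets only finitely many cosets of `U`
    obtain ⟨T, hTK, hT⟩ := hK.elim_nhds_subcover (fun t => {y | y - t ∈ U})
      fun t _ => by
        have : Filter.Tendsto (fun y => y - t) (𝓝 t) (𝓝 0) := by
          simpa using (continuous_sub_right t).tendsto t
        exact this (hU.mem_nhds U.zero_mem)
    have : {p : P | Set.MapsTo (s p).1 K O} = ⋂ t ∈ T, {p : P | p.1 t ∈ O} := by
      ext p
      simp only [Set.mem_ofPred_eq, Set.mem_iInter]
      refine ⟨fun h t ht => h (hTK t ht), fun h y hy => ?_⟩
      obtain ⟨t, ht, hty⟩ := Set.mem_iUnion₂.1 (hT hy)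
      have h1 : p.1 (y - t) = 0 := p.2.2 _ hty
      rw [p.2.1.map_sub, sub_eq_zero] at h1
      change p.1 y ∈ O
      exact h1 ▸ h t ht
    refine this ▸ isOpen_biInter_finset fun t _ => ?_
    exact hO.preimage ((continuous_apply t).comp continuous_subtype_val)
  convert isCompact_range hs using 1
  ext ν
  refine ⟨fun h => ⟨⟨ν.1, ν.2, h⟩, rfl⟩, ?_⟩
  rintro ⟨p, rfl⟩
  exact p.2.2

/-- Reflexivity: every continuous linear functional on the dual is evaluation at a point. By
continuity it kills all functionals vanishing on some compact subspace `C`; finite-dimensional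
duality then represents it on any finite set of functionals by a point of `C`, and compactness of
`C` provides a single point for all functionals. -/
theorem exists_eval_eq [LocallyCompactSpace M] (φ : LinDual Fq M → Fq) (hφ : Continuous φ)
    (hadd : ∀ μ ν, φ (μ + ν) = φ μ + φ ν) (hsmul : ∀ (c : Fq) μ, φ (c • μ) = c * φ μ) :
    ∃ x : M, ∀ ν : LinDual Fq M, φ ν = ν.1 x := by
  classical
  let z : LinDual Fq M := ⟨ContinuousMap.const M 0, ⟨by simp, by simp⟩⟩
  have hz : φ z = 0 := by
    have : z = (0 : Fq) • z := Subtype.ext (ContinuousMap.ext fun x => (zero_mul (0 : Fq)).symm)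
    rw [this, hsmul, zero_mul]
  -- `φ` only depends on the restriction of functionals to some compact set `K`
  obtain ⟨K, hK, hKφ⟩ : ∃ K : Set M, IsCompact K ∧
      ∀ ν : LinDual Fq M, (∀ x ∈ K, ν.1 x = 0) → φ ν = 0 := by
    have h1 : φ ⁻¹' {0} ∈ 𝓝 z :=
      ((isOpen_discrete {(0 : Fq)}).preimage hφ).mem_nhds hz
    obtain ⟨O, hO, hOφ⟩ := mem_nhds_subtype _ _ _ |>.1 h1
    have hb : (𝓝 (0 : Fq)).HasBasis (fun _ : Unit => True) fun _ => {0} := by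
      rw [nhds_discrete]; exact Filter.hasBasis_pure 0
    obtain ⟨⟨K, u⟩, ⟨hK, _⟩, hKO⟩ := (hb.nhds_continuousMapConst (X := M)).mem_iff.1 hO
    exact ⟨K, hK, fun ν hν => hOφ (hKO fun x hx => hν x hx)⟩
  obtain ⟨C, hC, -, hKC⟩ := exists_compact_submodule Fq hK
  let D : (M →L[Fq] Fq) → LinDual Fq M := fun l => ⟨⟨l, l.continuous⟩, l.toLinearMap.isLinear⟩
  let φ' : (M →L[Fq] Fq) →ₗ[Fq] Fq :=
    { toFun := fun l => φ (D l)
      map_add' := fun a b => hadd (D a) (D b)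
      map_smul' := fun c a => hsmul c (D a) }
  have hφ' : ∀ l : M →L[Fq] Fq, (∀ x ∈ C, l x = 0) → φ' l = 0 := fun l hl =>
    hKφ (D l) fun x hx => hl x (hKC hx)
  have hfin : ∀ s : Finset (M →L[Fq] Fq),
      ((C : Set M) ∩ ⋂ l ∈ s, {x | l x = φ' l}).Nonempty := by
    intro s
    let E : M →ₗ[Fq] (s → Fq) := LinearMap.pi fun l => l.1.toLinearMap
    have hmem : (fun l : s => φ' l.1) ∈ C.map E := by
      by_contra hno
      obtain ⟨f, hf, hfC⟩ := Submodule.exists_le_ker_of_notMem hno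
      have hfs : ∀ v : s → Fq, f v = ∑ l, v l * f (Pi.single l 1) := fun v => by
        conv_lhs => rw [pi_eq_sum_univ' v]
        simp [Pi.single]
      have h0 : φ' (∑ l : s, f (Pi.single l 1) • l.1) = 0 := by
        refine hφ' _ fun x hx => ?_
        have h2 : f (E x) = 0 := hfC ⟨x, hx, rfl⟩
        rw [hfs] at h2
        rw [← h2]
        simp [E, mul_comm]
      apply hf
      rw [hfs, ← h0]
      simp [map_sum, mul_comm]
    obtain ⟨x, hx, hxE⟩ := hmem
    exact ⟨x, hx, Set.mem_iInter₂.2 fun l hl => congrFun hxE ⟨l, hl⟩⟩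
  obtain ⟨x, -, hx⟩ := hC.inter_iInter_nonempty _
    (fun l : M →L[Fq] Fq => isClosed_eq l.continuous continuous_const) hfin
  refine ⟨x, fun ν => ?_⟩
  exact (Set.mem_iInter.1 hx ⟨ν.2.mk', ν.1.continuous⟩).symm

variable {N : Type*} [AddCommGroup N] [Module Fq N] [TopologicalSpace N] [ContinuousAdd N]
  [ContinuousSMul Fq N] [LocallyCompactSpace N] [T2Space N]

theorem CLMap.ext_of_forall_dual {X : Type*} [TopologicalSpace X] [Add X] [SMul Fq X]
    {g g' : CLMap Fq X N} (h : ∀ x (ν : LinDual Fq N), ν.1 (g.toFun x) = ν.1 (g'.toFun x)) :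
    g = g' := by
  have : g.toFun = g'.toFun := funext fun x => eq_of_forall_dual (h x)
  cases g; cases g'; congr

/-- Existence of the transpose. Reflexivity of `N` defines `g`; its continuity comes from the
compactness of the annihilators of open subspaces of `N`. -/
theorem exists_transpose (f : CLMap Fq (LinDual Fq N) M) :
    ∃ g : CLMap Fq (LinDual Fq M) N,
      ∀ (μ : LinDual Fq M) (ν : LinDual Fq N), μ.1 (f.toFun ν) = ν.1 (g.toFun μ) := by
  have hex : ∀ μ : LinDual Fq M, ∃ y : N, ∀ ν : LinDual Fq N, μ.1 (f.toFun ν) = ν.1 y :=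
    fun μ => exists_eval_eq (fun ν => μ.1 (f.toFun ν)) (μ.1.continuous.comp f.continuous')
      (fun a b => by rw [f.map_add', μ.2.map_add])
      (fun c a => by rw [f.map_smul', μ.2.map_smul, smul_eq_mul])
  choose g hg using hex
  have : ContinuousNeg N := ContinuousNeg.of_continuousConstSMul Fq N
  have : IsTopologicalAddGroup N := ⟨⟩
  refine ⟨⟨g, ?_, fun a b => ?_, fun c a => ?_⟩, hg⟩
  · refine continuous_iff_continuousAt.2 fun μ₀ => ?_
    rw [ContinuousAt, ← tendsto_sub_nhds_zero_iff]
    intro W hW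
    obtain ⟨U, hU, hUW⟩ := exists_open_submodule Fq hW
    -- `g μ - g μ₀ ∈ U` as soon as `μ` and `μ₀` agree on the compact set `f (U^⊥)`
    have hK := (isCompact_annihilator U hU).image f.continuous'
    set K := f.toFun '' {ν : LinDual Fq N | ∀ x ∈ U, ν.1 x = 0} with hKdef
    have hev : ∀ᶠ μ : LinDual Fq M in 𝓝 μ₀, ∀ c : Fq,
        Set.MapsTo μ.1 (K ∩ μ₀.1 ⁻¹' {c}) {c} :=
      Filter.eventually_all.2 fun c => continuous_subtype_val.continuousAt.eventually
        (ContinuousMap.eventually_mapsTo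
          (hK.inter_right ((isClosed_discrete {c}).preimage μ₀.1.continuous))
          (isOpen_discrete {c}) fun x hx => hx.2)
    refine Filter.mem_map.2 (Filter.mem_of_superset hev fun μ hμ => hUW ?_)
    by_contra hno
    obtain ⟨ν, hν, hne⟩ := exists_dual_ne_zero U hU hno
    refine hne ?_
    rw [ν.2.map_sub, ← hg, ← hg, sub_eq_zero]
    exact hμ (μ₀.1 (f.toFun ν)) ⟨⟨ν, hν, rfl⟩, rfl⟩
  · refine eq_of_forall_dual (Fq := Fq) fun ν => ?_
    rw [ν.2.map_add, ← hg, ← hg, ← hg]; rfl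
  · refine eq_of_forall_dual (Fq := Fq) fun ν => ?_
    rw [ν.2.map_smul, ← hg, ← hg]; rfl

end

/-- Let `M`, `N` be locally compact Hausdorff topological `Fq`-vector spaces,
and let `M^∨ = LinDual Fq M` denote the dual (continuous `Fq`-linear maps to the discrete
field `Fq`, with the compact-open topology).  For every continuous `Fq`-linear map
`f : N^∨ → M` there is a unique continuous `Fq`-linear map `g : M^∨ → N` with
`μ (f ν) = ν (g μ)` for all `μ ∈ M^∨`, `ν ∈ N^∨`; moreover `f ↦ g` is an `Fq`-linear
bijection between the two spaces of continuous `Fq`-linear maps. -/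
theorem stmt0 {Fq : Type*} [Field Fq] [Fintype Fq] [TopologicalSpace Fq] [DiscreteTopology Fq]
    (M N : Type*)
    [AddCommGroup M] [Module Fq M] [TopologicalSpace M] [ContinuousAdd M]
    [ContinuousSMul Fq M] [LocallyCompactSpace M] [T2Space M]
    [AddCommGroup N] [Module Fq N] [TopologicalSpace N] [ContinuousAdd N]
    [ContinuousSMul Fq N] [LocallyCompactSpace N] [T2Space N] :
    (∀ f : CLMap Fq (LinDual Fq N) M,
      ∃! g : CLMap Fq (LinDual Fq M) N,
        ∀ (μ : LinDual Fq M) (ν : LinDual Fq N), μ.1 (f.toFun ν) = ν.1 (g.toFun μ)) ∧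
    ∃ T : CLMap Fq (LinDual Fq N) M ≃ CLMap Fq (LinDual Fq M) N,
      (∀ f g, T (f + g) = T f + T g) ∧
      (∀ (c : Fq) f, T (c • f) = c • T f) ∧
      ∀ f (μ : LinDual Fq M) (ν : LinDual Fq N), μ.1 (f.toFun ν) = ν.1 ((T f).toFun μ) := by
  have ext_right : ∀ {f : CLMap Fq (LinDual Fq N) M} {g g' : CLMap Fq (LinDual Fq M) N},
      (∀ (μ : LinDual Fq M) (ν : LinDual Fq N), μ.1 (f.toFun ν) = ν.1 (g.toFun μ)) →
      (∀ (μ : LinDual Fq M) (ν : LinDual Fq N), μ.1 (f.toFun ν) = ν.1 (g'.toFun μ)) → g = g' :=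
    fun h h' => CLMap.ext_of_forall_dual fun μ ν => (h μ ν).symm.trans (h' μ ν)
  refine ⟨fun f => ?_, ?_⟩
  · obtain ⟨g, hg⟩ := exists_transpose f
    exact ⟨g, hg, fun g' hg' => ext_right hg' hg⟩
  · choose T hT using fun f : CLMap Fq (LinDual Fq N) M => exists_transpose f
    choose S hS using fun g : CLMap Fq (LinDual Fq M) N => exists_transpose g
    refine ⟨⟨T, S, fun f => ?_, fun g => ?_⟩, fun f f' => ?_, fun c f => ?_, hT⟩
    · exact CLMap.ext_of_forall_dual fun ν μ => ((hT f μ ν).trans (hS (T f) ν μ)).symm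
    · exact CLMap.ext_of_forall_dual fun μ ν => ((hS g ν μ).trans (hT (S g) μ ν)).symm
    · refine ext_right (hT (f + f')) fun μ ν => ?_
      change μ.1 (f.toFun ν + f'.toFun ν) = ν.1 ((T f).toFun μ + (T f').toFun μ)
      rw [μ.2.map_add, ν.2.map_add, hT, hT]
    · refine ext_right (hT (c • f)) fun μ ν => ?_
      change μ.1 (c • f.toFun ν) = ν.1 (c • (T f).toFun μ)
      rw [μ.2.map_smul, ν.2.map_smul, hT]
end

section
/- Let n ≥ 1 and d ≥ 1 be integers and define S_{n,d} := ∑_{(a_1,…,a_n) ∈ F_q^n} (a_1 x_1 + ⋯ + a_n x_n)^d ∈ F_q[x_1,…,x_n], the sum of the d-th powers of all homogeneous linear polynomials in x_1,…,x_n over F_q. If d_1,…,d_n are nonnegative integers such that the coefficient of the monomial x_1^{d_1}⋯x_n^{d_n} in S_{n,d} is nonzero, then for every 1 ≤ j ≤ n one has d_1 + ⋯ + d_j ≥ q^j − 1. In particular, if d < q^n − 1 then S_{n,d} = 0. -/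
/-!
Write `q` for the cardinality of the finite field and `L_a = ∑ a_i x_i`. Expanding the exponent
`s = r_0 + r_1 q + r_2 q² + ⋯` in base `q` and using that `L_a ^ q = ∑ a_i x_i ^ q`, the power
`L_a ^ s` is a polynomial in `a` of total degree at most the digit sum of `s`
(`exists_lowDegree`). If `s < q ^ m - 1`, where `m` is the number of variables, this digit sum is
less than `(q - 1) m`, so the sum over all `a` vanishes by the Chevalley–Warning argument
(`sum_eval_algebraMap_eq_zero`, `sum_linear_pow_eq_zero`); for `m = n` this is the second claim.

For the first claim, split `L_a = A + B`, where `A` collects the first `j` variables. By the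
binomial theorem the sum of `L_a ^ d` is a combination of the products
`(∑ A ^ k) * B ^ (d - k)`, and only the terms with `k ≥ q ^ j - 1` survive. Such a term is
homogeneous of degree `k` in the first `j` variables, so each of its monomials satisfies
`d_1 + ⋯ + d_j = k ≥ q ^ j - 1`.
-/

/-- The Chevalley–Warning vanishing of `∑ a, P a` over the `K`-points, for a polynomial `P` of low
degree whose coefficients lie in an arbitrary commutative `K`-algebra. -/
theorem sum_eval_algebraMap_eq_zero {K R σ : Type*} [Field K] [Fintype K] [CommRing R]
    [Algebra K R] [Fintype σ] [DecidableEq σ] (P : MvPolynomial σ R)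
    (hP : P.totalDegree < (Fintype.card K - 1) * Fintype.card σ) :
    ∑ a : σ → K, MvPolynomial.eval (fun i => algebraMap K R (a i)) P = 0 := by
  simp_rw [MvPolynomial.eval_eq']
  rw [Finset.sum_comm]
  refine Finset.sum_eq_zero fun m hm => ?_
  rw [← Finset.mul_sum]
  have h := MvPolynomial.sum_eval_eq_zero (MvPolynomial.monomial m (1 : K)) (by
    rw [MvPolynomial.totalDegree_monomial _ one_ne_zero]
    exact (MvPolynomial.le_totalDegree hm).trans_lt hP)
  have h2 := congrArg (algebraMap K R) h
  simp only [MvPolynomial.eval_monomial, one_mul, map_sum, map_zero, Finsupp.prod_pow, map_prod,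
    map_pow] at h2
  rw [h2, mul_zero]

/-- If `s < q ^ m`, then `(∑ a_i y_i) ^ s` is a polynomial in `a` of degree at most the base-`q`
digit sum of `s`. Only the resulting bound is recorded: at most `(q - 1) m`, and strictly less
unless all `m` digits equal `q - 1`, that is `s = q ^ m - 1`. -/
theorem exists_lowDegree {K R σ : Type*} [Field K] [Fintype K] [CommRing R]
    [Algebra K R] [Fintype σ] (m : ℕ) :
    ∀ (s : ℕ) (y : σ → R), s < Fintype.card K ^ m →
      ∃ P : MvPolynomial σ R, P.totalDegree ≤ (Fintype.card K - 1) * m ∧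
        (s + 1 < Fintype.card K ^ m → P.totalDegree < (Fintype.card K - 1) * m) ∧
        ∀ a : σ → K, MvPolynomial.eval (fun i => algebraMap K R (a i)) P
          = (∑ i, algebraMap K R (a i) * y i) ^ s := by
  induction m with
  | zero =>
    intro s y hs
    obtain rfl : s = 0 := by simpa using hs
    exact ⟨1, by simp, by simp, by simp⟩
  | succ m ih =>
    intro s y hs
    have hq : 1 < Fintype.card K := Fintype.one_lt_card
    set q := Fintype.card K with hqdef
    have hdiv : s / q < q ^ m := by
      rw [Nat.div_lt_iff_lt_mul (by omega)]; simpa [pow_succ] using hs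
    obtain ⟨P, hP1, hP2, hP3⟩ := ih (s / q) (fun i => y i ^ q) hdiv
    have hmod : s % q < q := Nat.mod_lt _ (by omega)
    have hsq := Nat.div_add_mod s q
    let L : MvPolynomial σ R := ∑ i, MvPolynomial.C (y i) * MvPolynomial.X i
    have hL : L.totalDegree ≤ 1 := by
      refine MvPolynomial.totalDegree_finsetSum_le fun i _ => ?_
      rw [MvPolynomial.C_mul_X_eq_monomial]
      exact (MvPolynomial.totalDegree_monomial_le _ _).trans (by simp)
    have hdeg : (P * L ^ (s % q)).totalDegree ≤ P.totalDegree + s % q := by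
      refine (MvPolynomial.totalDegree_mul _ _).trans (Nat.add_le_add_left ?_ _)
      refine (MvPolynomial.totalDegree_pow _ _).trans ?_
      simpa using Nat.mul_le_mul_left (s % q) hL
    refine ⟨P * L ^ (s % q), ?_, fun hs1 => ?_, fun a => ?_⟩
    · rw [mul_add]; omega
    · rw [mul_add]
      by_cases h : s / q + 1 < q ^ m
      · have := hP2 h; omega
      · -- the leading digits are all `q - 1`, so the last digit is not
        have h1 : s / q + 1 = q ^ m := by omega
        have h2 : s % q + 1 < q := by
          rw [pow_succ, ← h1] at hs1
          have : (s / q + 1) * q = q * (s / q) + q := by ring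
          omega
        omega
    · have hfrob : (∑ i, algebraMap K R (a i) * y i) ^ q
          = ∑ i, algebraMap K R (a i) * y i ^ q := by
        have := map_sum (FiniteField.frobeniusAlgHom K R)
          (fun i => algebraMap K R (a i) * y i) Finset.univ
        simp only [map_mul, AlgHom.commutes] at this
        exact this
      have hLe : MvPolynomial.eval (fun i => algebraMap K R (a i)) L
          = ∑ i, algebraMap K R (a i) * y i := by
        simp [L, mul_comm]
      rw [map_mul, map_pow, hP3, hLe, ← hfrob, ← pow_mul, ← pow_add, hsq]

theorem sum_linear_pow_eq_zero {K R σ : Type*} [Field K] [Fintype K] [CommRing R]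
    [Algebra K R] [Fintype σ] [DecidableEq σ] (y : σ → R) (s : ℕ)
    (hs : s < Fintype.card K ^ Fintype.card σ - 1) :
    ∑ a : σ → K, (∑ i, algebraMap K R (a i) * y i) ^ s = 0 := by
  obtain ⟨P, -, hP, hev⟩ :=
    exists_lowDegree (K := K) (Fintype.card σ) s y (by omega)
  rw [← sum_eval_algebraMap_eq_zero (K := K) P (hP (by omega))]
  exact Finset.sum_congr rfl fun a _ => (hev a).symm

/-- Let `S_{n,d} := ∑_{a ∈ F_q^n} (a_1 x_1 + ⋯ + a_n x_n)^d` be the sum of the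
`d`-th powers of all homogeneous linear polynomials in `n` variables over the finite field `Fq`.
If the coefficient of `x_1^{d_1} ⋯ x_n^{d_n}` in `S_{n,d}` is nonzero, then for every
`1 ≤ j ≤ n` one has `d_1 + ⋯ + d_j ≥ q^j − 1`; in particular `S_{n,d} = 0` when
`d < q^n − 1`. -/
theorem stmt2 {Fq : Type*} [Field Fq] [Fintype Fq] (n d : ℕ) (hn : 1 ≤ n) (hd : 1 ≤ d) :
    (∀ dv : Fin n →₀ ℕ,
      MvPolynomial.coeff dv
          (∑ a : Fin n → Fq, (∑ i : Fin n, MvPolynomial.C (a i) * MvPolynomial.X i) ^ d) ≠ 0 →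
      ∀ j : ℕ, 1 ≤ j → j ≤ n →
        Fintype.card Fq ^ j - 1 ≤ ∑ i ∈ Finset.univ.filter (fun i : Fin n => (i : ℕ) < j), dv i) ∧
    (d < Fintype.card Fq ^ n - 1 →
      (∑ a : Fin n → Fq, (∑ i : Fin n, MvPolynomial.C (a i) * MvPolynomial.X i) ^ d)
        = (0 : MvPolynomial (Fin n) Fq)) := by
  classical
  refine ⟨fun dv hdv j _ hjn => ?_, fun hlt => ?_⟩
  · let p : Fin n → Prop := fun i => (i : ℕ) < j
    -- the degree in the first `j` variables
    let w : Fin n → ℕ := fun i => if p i then 1 else 0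
    have hcard : Fintype.card {i // p i} = j := by
      rw [Fintype.card_subtype]
      simp [p, Fin.card_filter_val_lt, hjn]
    by_contra hcon
    apply hdv
    let A : ({i // p i} → Fq) → MvPolynomial (Fin n) Fq :=
      fun a => ∑ i, MvPolynomial.C (a i) * MvPolynomial.X i.1
    let B : ({i // ¬ p i} → Fq) → MvPolynomial (Fin n) Fq :=
      fun b => ∑ i, MvPolynomial.C (b i) * MvPolynomial.X i.1
    have hA : ∀ a, MvPolynomial.IsWeightedHomogeneous w (A a) 1 := fun a =>
      MvPolynomial.IsWeightedHomogeneous.sum _ _ _ fun i _ => by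
        have h := (MvPolynomial.isWeightedHomogeneous_C w (a i)).mul
          (MvPolynomial.isWeightedHomogeneous_X Fq w i.1)
        simpa [w, i.2] using h
    have hB : ∀ b, MvPolynomial.IsWeightedHomogeneous w (B b) 0 := fun b =>
      MvPolynomial.IsWeightedHomogeneous.sum _ _ _ fun i _ => by
        have h := (MvPolynomial.isWeightedHomogeneous_C w (b i)).mul
          (MvPolynomial.isWeightedHomogeneous_X Fq w i.1)
        simpa [w, i.2] using h
    have hw : Finsupp.weight w dv = ∑ i ∈ Finset.univ.filter (fun i : Fin n => (i : ℕ) < j), dv i := by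
      rw [Finsupp.weight_apply, Finsupp.sum_fintype _ _ (by simp), Finset.sum_filter]
      simp [w, p]
    have hsplit : (∑ a : Fin n → Fq,
        (∑ i : Fin n, MvPolynomial.C (a i) * MvPolynomial.X i) ^ d)
        = ∑ b, ∑ k ∈ Finset.range (d + 1),
            (∑ a, A a ^ k) * B b ^ (d - k) * (d.choose k : MvPolynomial (Fin n) Fq) := by
      rw [← (Equiv.piEquivPiSubtypeProd p (fun _ => Fq)).symm.sum_comp, Fintype.sum_prod_type_right]
      refine Finset.sum_congr rfl fun b _ => ?_
      simp_rw [Finset.sum_mul]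
      rw [Finset.sum_comm]
      refine Finset.sum_congr rfl fun a _ => ?_
      rw [← add_pow, ← Fintype.sum_subtype_add_sum_subtype p]
      congr 2
      · exact Finset.sum_congr rfl fun i _ => by
          simp [Equiv.piEquivPiSubtypeProd, i.2]
      · exact Finset.sum_congr rfl fun i _ => by
          simp [Equiv.piEquivPiSubtypeProd, i.2]
    rw [hsplit, MvPolynomial.coeff_sum]
    refine Finset.sum_eq_zero fun b _ => ?_
    rw [MvPolynomial.coeff_sum]
    refine Finset.sum_eq_zero fun k _ => ?_
    by_cases hk : k < Fintype.card Fq ^ j - 1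
    · have h0 : ∑ a, A a ^ k = 0 :=
        sum_linear_pow_eq_zero (K := Fq) (fun i : {i // p i} =>
          (MvPolynomial.X i.1 : MvPolynomial (Fin n) Fq)) k (by rwa [hcard])
      simp [h0]
    · have h1 : MvPolynomial.IsWeightedHomogeneous w (∑ a, A a ^ k) k :=
        MvPolynomial.IsWeightedHomogeneous.sum _ _ _ fun a _ => by
          simpa using (hA a).pow k
      have h2 : MvPolynomial.IsWeightedHomogeneous w
          ((∑ a, A a ^ k) * B b ^ (d - k)) k := by
        simpa using h1.mul ((hB b).pow (d - k))
      rw [← map_natCast (MvPolynomial.C : Fq →+* MvPolynomial (Fin n) Fq), mul_comm,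
        MvPolynomial.coeff_C_mul, h2.coeff_eq_zero dv (by rw [hw]; omega), mul_zero]
  · exact sum_linear_pow_eq_zero (K := Fq)
      (fun i => (MvPolynomial.X i : MvPolynomial (Fin n) Fq)) d (by simpa using hlt)
end

section
/- Let V ⊆ L be an infinite-dimensional locally finite subspace with ordered basis (v_i)_{i≥1}. If (v'_i)_{i≥1} is a sequence of F_q-linearly independent elements of V with ‖v'_1‖ ≤ ‖v'_2‖ ≤ ‖v'_3‖ ≤ ⋯, then ‖v'_i‖ ≥ ‖v_i‖ for all i ≥ 1. In particular, any two ordered bases of V have the same sequence of absolute values. -/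
/-!
The `i` vectors `v 0, …, v (i-1)` span a space of dimension at most `i`, so among the `i + 1`
independent vectors `v' 0, …, v' i` some `v' j` lies outside that span. Minimality of `v i` and
monotonicity of the norms give `‖v i‖ ≤ ‖v' j‖ ≤ ‖v' i‖` (`IsOrderedBasis.norm_le`).
An ordered basis is itself linearly independent with weakly increasing norms, so for two ordered
bases the inequality holds in both directions.
-/

/-!  Context.  `Fq` is a finite field, `L` a complete nonarchimedean valued field extension of
`Fq` whose (multiplicative) norm is trivial on `Fq`.  A *locally finite subspace* of `L` is an
`Fq`-subspace having only finitely many elements of norm at most `r`, for every `r > 0`.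
An *ordered basis* of such a subspace `V` is a sequence `(v_i)` such that each `v_m` is an
element of minimal norm of `V` outside the span of the previous ones. -/

/-- `V` is a locally finite `Fq`-subspace of `L`. -/
def IsLocallyFiniteSubspace (Fq : Type*) [Field Fq] {L : Type*} [NormedField L]
    [Algebra Fq L] (V : Submodule Fq L) : Prop :=
  ∀ r : ℝ, 0 < r → {x : L | x ∈ V ∧ ‖x‖ ≤ r}.Finite

/-- `v` is an ordered basis of the locally finite subspace `V ⊆ L` (indices shifted so that
`v 0` is the paper's `v_1`). -/
def IsOrderedBasis (Fq : Type*) [Field Fq] {L : Type*} [NormedField L]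
    [Algebra Fq L] (V : Submodule Fq L) (v : ℕ → L) : Prop :=
  ∀ m : ℕ,
    v m ∈ V ∧ v m ∉ Submodule.span Fq (Set.range fun i : Fin m => v i) ∧
      ∀ x ∈ V, x ∉ Submodule.span Fq (Set.range fun i : Fin m => v i) → ‖v m‖ ≤ ‖x‖

/-- The comparison of norms at a single index `i`. Independence is assumed only for the first
`i + 1` vectors of `u`, so that it applies to an ordered basis through
`IsOrderedBasis.linearIndependent_fin`. -/
theorem IsOrderedBasis.norm_le {Fq L : Type*} [Field Fq] [NormedField L] [Algebra Fq L]
    {V : Submodule Fq L} {v : ℕ → L} (hv : IsOrderedBasis Fq V v) {u : ℕ → L}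
    (hu : ∀ i, u i ∈ V) (hmono : Monotone fun i => ‖u i‖) (i : ℕ)
    (hind : LinearIndependent Fq fun j : Fin (i + 1) => u j) : ‖v i‖ ≤ ‖u i‖ := by
  obtain ⟨j, hj⟩ : ∃ j : Fin (i + 1),
      u j ∉ Submodule.span Fq (Set.range fun k : Fin i => v k) := by
    by_contra! h
    have hle : Submodule.span Fq (Set.range fun j : Fin (i + 1) => u j) ≤
        Submodule.span Fq (Set.range fun k : Fin i => v k) :=
      Submodule.span_le.2 (Set.range_subset_iff.2 h)
    have : FiniteDimensional Fq (Submodule.span Fq (Set.range fun k : Fin i => v k)) :=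
      FiniteDimensional.span_of_finite Fq (Set.finite_range _)
    have h1 := Submodule.finrank_mono hle
    have h2 : (Set.range fun k : Fin i => v k).finrank Fq ≤ Fintype.card (Fin i) :=
      finrank_range_le_card (R := Fq) fun k : Fin i => v k
    rw [finrank_span_eq_card hind] at h1
    simp only [Set.finrank, Fintype.card_fin] at h1 h2
    omega
  exact ((hv i).2.2 _ (hu j) hj).trans (hmono (Nat.lt_succ_iff.1 j.2))

theorem IsOrderedBasis.monotone_norm {Fq L : Type*} [Field Fq] [NormedField L] [Algebra Fq L]
    {V : Submodule Fq L} {v : ℕ → L} (hv : IsOrderedBasis Fq V v) :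
    Monotone fun i => ‖v i‖ := by
  refine monotone_nat_of_le_succ fun m => (hv m).2.2 _ (hv (m + 1)).1 fun h => ?_
  refine (hv (m + 1)).2.1 (Submodule.span_mono ?_ h)
  rintro _ ⟨k, rfl⟩
  exact ⟨k.castSucc, rfl⟩

theorem IsOrderedBasis.linearIndependent_fin {Fq L : Type*} [Field Fq] [NormedField L]
    [Algebra Fq L] {V : Submodule Fq L} {v : ℕ → L} (hv : IsOrderedBasis Fq V v) (n : ℕ) :
    LinearIndependent Fq fun j : Fin n => v j := by
  induction n with
  | zero => exact linearIndependent_empty_type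
  | succ n ih => exact linearIndependent_finSucc'.2 ⟨ih, (hv n).2.1⟩

/-- If `(v_i)` is an ordered basis of an infinite-dimensional locally finite
subspace `V ⊆ L` and `(v'_i)` is an `Fq`-linearly independent sequence in `V` with weakly
increasing norms, then `‖v'_i‖ ≥ ‖v_i‖` for all `i`; in particular any two ordered bases of `V`
have the same sequence of norms. -/
theorem stmt3 {Fq L : Type*} [Field Fq] [Fintype Fq] [NormedField L] [IsUltrametricDist L]
    [CompleteSpace L] [Algebra Fq L]
    (htriv : ∀ c : Fq, c ≠ 0 → ‖algebraMap Fq L c‖ = 1)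
    (V : Submodule Fq L) (hV : IsLocallyFiniteSubspace Fq V)
    (hinf : ¬ Module.Finite Fq V)
    (v : ℕ → L) (hv : IsOrderedBasis Fq V v)
    (v' : ℕ → L) (hv'mem : ∀ i, v' i ∈ V) (hv'ind : LinearIndependent Fq v')
    (hv'mono : Monotone fun i => ‖v' i‖) :
    (∀ i, ‖v i‖ ≤ ‖v' i‖) ∧
      ∀ w : ℕ → L, IsOrderedBasis Fq V w → ∀ i, ‖w i‖ = ‖v i‖ := by
  refine ⟨fun i => hv.norm_le hv'mem hv'mono i (hv'ind.comp _ Fin.val_injective), fun w hw i => ?_⟩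
  exact le_antisymm
    (hw.norm_le (fun k => (hv k).1) hv.monotone_norm i (hv.linearIndependent_fin _))
    (hv.norm_le (fun k => (hw k).1) hw.monotone_norm i (hw.linearIndependent_fin _))
end

section
/- Let V ⊆ L be an infinite-dimensional locally finite subspace and let W ⊆ V be an F_q-subspace with dim_{F_q}(V/W) = 1 (so W is again an infinite-dimensional locally finite subspace). Let (r_i)_{i≥1} and (s_i)_{i≥1} be the norm sequences of V and W, respectively. Then there exists a positive integer m such that s_i = r_i for all i < m and s_i = r_{i+1} for all i ≥ m. -/
section

variable {Fq L : Type*} [Field Fq] [NormedField L] [Algebra Fq L]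
  {V W : Submodule Fq L} {v w : ℕ → L}

theorem IsOrderedBasis.norm_mono (hv : IsOrderedBasis Fq V v) {m n : ℕ} (h : m ≤ n) :
    ‖v m‖ ≤ ‖v n‖ := by
  refine (hv m).2.2 _ (hv n).1 fun hmem => (hv n).2.1 (Submodule.span_mono ?_ hmem)
  rintro _ ⟨i, rfl⟩
  exact ⟨⟨i, i.2.trans_le h⟩, rfl⟩

theorem IsOrderedBasis.linearIndependent (hv : IsOrderedBasis Fq V v) (n : ℕ) :
    LinearIndependent Fq (fun i : Fin n => v i) := by
  induction n with
  | zero => exact linearIndependent_empty_type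
  | succ n ih => exact linearIndependent_finSucc'.2 ⟨ih, (hv n).2.1⟩

/-- The successive-minimum property of an ordered basis. -/
theorem IsOrderedBasis.norm_le_s4 (hv : IsOrderedBasis Fq V v) {n : ℕ} {R : ℝ} {s : Set L}
    (hs : s ⊆ V) (hR : ∀ x ∈ s, ‖x‖ ≤ R)
    (hn : n < Module.finrank Fq (Submodule.span Fq s)) : ‖v n‖ ≤ R := by
  by_contra! hlt
  have hsub : Submodule.span Fq s ≤ Submodule.span Fq (Set.range fun i : Fin n => v i) := by
    refine Submodule.span_le.2 fun x hx => ?_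
    by_contra hx'
    exact absurd ((hv n).2.2 x (hs hx) hx') (not_le.2 ((hR x hx).trans_lt hlt))
  have : FiniteDimensional Fq (Submodule.span Fq (Set.range fun i : Fin n => v i)) :=
    FiniteDimensional.span_of_finite Fq (Set.finite_range _)
  have h1 := Submodule.finrank_mono hsub
  rw [finrank_span_eq_card (hv.linearIndependent n), Fintype.card_fin] at h1
  omega

/-- By local finiteness the norms `‖v n‖` are unbounded, so the vectors `v n` exhaust `V`. -/
theorem IsOrderedBasis.exists_mem_span (hv : IsOrderedBasis Fq V v)
    (hV : IsLocallyFiniteSubspace Fq V) {x : L} (hx : x ∈ V) :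
    ∃ n, x ∈ Submodule.span Fq (Set.range fun i : Fin n => v i) := by
  by_contra! h
  have hinj : Function.Injective v := by
    have hne : ∀ a b, a < b → v a ≠ v b := fun a b hab heq => by
      refine (hv b).2.1 ?_
      rw [← heq]
      exact Submodule.subset_span ⟨⟨a, hab⟩, rfl⟩
    intro a b heq
    rcases lt_trichotomy a b with h | h | h
    · exact absurd heq (hne a b h)
    · exact h
    · exact absurd heq.symm (hne b a h)
  refine Set.infinite_range_of_injective hinj ((hV (‖x‖ + 1) (by positivity)).subset ?_)
  rintro _ ⟨n, rfl⟩
  exact ⟨(hv n).1, ((hv n).2.2 x hx (h n)).trans (by linarith)⟩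

theorem norm_le_of_mem_span [IsUltrametricDist L]
    (htriv : ∀ c : Fq, c ≠ 0 → ‖algebraMap Fq L c‖ = 1) {s : Set L} {R : ℝ} (hR0 : 0 ≤ R)
    (hR : ∀ x ∈ s, ‖x‖ ≤ R) {x : L} (hx : x ∈ Submodule.span Fq s) : ‖x‖ ≤ R := by
  induction hx using Submodule.span_induction with
  | mem x hx => exact hR x hx
  | zero => simpa using hR0
  | add x y _ _ hx hy => exact (IsUltrametricDist.norm_add_le_max x y).trans (max_le hx hy)
  | smul c x _ hx =>
    rcases eq_or_ne c 0 with rfl | hc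
    · simpa using hR0
    · rwa [Algebra.smul_def, norm_mul, htriv c hc, one_mul]

theorem exists_sub_smul_mem
    (hcodim : Module.finrank Fq (↥V ⧸ Submodule.comap V.subtype W) = 1)
    {u x : L} (hu : u ∈ V) (huW : u ∉ W) (hx : x ∈ V) : ∃ c : Fq, x - c • u ∈ W := by
  have hne : (Submodule.comap V.subtype W).mkQ ⟨u, hu⟩ ≠ 0 := by
    simpa [Submodule.Quotient.mk_eq_zero] using huW
  obtain ⟨c, hc⟩ := (finrank_eq_one_iff_of_nonzero' _ hne).1 hcodim
    ((Submodule.comap V.subtype W).mkQ ⟨x, hx⟩)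
  refine ⟨c, ?_⟩
  rw [← map_smul, eq_comm, ← sub_eq_zero, ← map_sub, Submodule.mkQ_apply,
    Submodule.Quotient.mk_eq_zero] at hc
  simpa using hc

end

/-- Let `V ⊆ L` be an infinite-dimensional locally finite subspace and
`W ⊆ V` an `Fq`-subspace with `dim (V/W) = 1`.  If `(r_i)` and `(s_i)` are the norm sequences
of `V` and `W` (given here by ordered bases `v`, `w`, with a 0-based index shift), there is
`m` with `s_i = r_i` for `i < m` and `s_i = r_{i+1}` for `i ≥ m`. -/
theorem stmt4 {Fq L : Type*} [Field Fq] [Fintype Fq] [NormedField L] [IsUltrametricDist L]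
    [CompleteSpace L] [Algebra Fq L]
    (htriv : ∀ c : Fq, c ≠ 0 → ‖algebraMap Fq L c‖ = 1)
    (V W : Submodule Fq L) (hWV : W ≤ V)
    (hV : IsLocallyFiniteSubspace Fq V) (hinf : ¬ Module.Finite Fq V)
    (hcodim : Module.finrank Fq (↥V ⧸ Submodule.comap V.subtype W) = 1)
    (v w : ℕ → L) (hv : IsOrderedBasis Fq V v) (hw : IsOrderedBasis Fq W w) :
    ∃ m : ℕ, (∀ i < m, ‖w i‖ = ‖v i‖) ∧ ∀ i, m ≤ i → ‖w i‖ = ‖v (i + 1)‖ := by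
  have hex : ∃ m, v m ∉ W := by
    by_contra! h
    have htop : Submodule.comap V.subtype W = ⊤ := by
      refine eq_top_iff.2 fun x _ => ?_
      obtain ⟨n, hn⟩ := hv.exists_mem_span hV x.2
      refine (Submodule.span_le.2 ?_ : _ ≤ W) hn
      rintro _ ⟨i, rfl⟩
      exact h i
    rw [htop] at hcodim
    simp [Module.finrank_zero_of_subsingleton] at hcodim
  classical
  set m := Nat.find hex with hm
  have hmW : v m ∉ W := Nat.find_spec hex
  have hlow : ∀ i, ‖v i‖ ≤ ‖w i‖ := fun i => by
    refine hv.norm_le_s4 (s := Set.range fun j : Fin (i + 1) => w j) ?_ ?_ ?_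
    · rintro _ ⟨j, rfl⟩
      exact hWV (hw j).1
    · rintro _ ⟨j, rfl⟩
      exact hw.norm_mono (by omega)
    · rw [finrank_span_eq_card (hw.linearIndependent _), Fintype.card_fin]
      omega
  refine ⟨m, fun i hi => le_antisymm ?_ (hlow i), fun i hi => le_antisymm ?_ ?_⟩
  · refine hw.norm_le_s4 (s := Set.range fun j : Fin (i + 1) => v j) ?_ ?_ ?_
    · rintro _ ⟨j, rfl⟩
      exact not_not.1 (Nat.find_min hex (show (j : ℕ) < m by omega))
    · rintro _ ⟨j, rfl⟩
      exact hv.norm_mono (by omega)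
    · rw [finrank_span_eq_card (hv.linearIndependent _), Fintype.card_fin]
      omega
  · set S := Submodule.span Fq (Set.range fun j : Fin (i + 2) => v j) with hS
    have : FiniteDimensional Fq S := FiniteDimensional.span_of_finite Fq (Set.finite_range _)
    have hSV : S ≤ V := Submodule.span_le.2 (by rintro _ ⟨j, rfl⟩; exact (hv j).1)
    have hmS : v m ∈ S := Submodule.subset_span ⟨⟨m, by omega⟩, rfl⟩
    have hle : S ≤ (W ⊓ S) ⊔ Submodule.span Fq {v m} := fun x hx => by
      obtain ⟨c, hc⟩ := exists_sub_smul_mem hcodim (hv m).1 hmW (hSV hx)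
      exact Submodule.mem_sup.2 ⟨_, ⟨hc, S.sub_mem hx (S.smul_mem c hmS)⟩, c • v m,
        Submodule.smul_mem _ c (Submodule.mem_span_singleton_self _), sub_add_cancel _ _⟩
    have : FiniteDimensional Fq (W ⊓ S : Submodule Fq L) :=
      Submodule.finiteDimensional_of_le inf_le_right
    have h1 := Submodule.finrank_mono hle
    have h2 := Submodule.finrank_add_le_finrank_add_finrank (W ⊓ S) (Submodule.span Fq {v m})
    have h3 : Module.finrank Fq (Submodule.span Fq {v m}) ≤ 1 := by
      simpa using finrank_span_le_card (R := Fq) ({v m} : Set L)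
    have h4 : Module.finrank Fq S = i + 2 := by
      rw [hS, finrank_span_eq_card (hv.linearIndependent _), Fintype.card_fin]
    refine hw.norm_le_s4 (s := (W ⊓ S : Submodule Fq L)) (fun x hx => hx.1) (fun x hx => ?_) ?_
    · refine norm_le_of_mem_span htriv (norm_nonneg _) ?_ hx.2
      rintro _ ⟨j, rfl⟩
      exact hv.norm_mono (by omega)
    · rw [Submodule.span_eq]
      omega
  · have hind : LinearIndependent Fq
        (Fin.cons (v m) (fun j : Fin (i + 1) => w j) : Fin (i + 2) → L) := by
      refine linearIndependent_finCons.2 ⟨hw.linearIndependent _, fun h => hmW ?_⟩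
      refine (Submodule.span_le.2 ?_ : _ ≤ W) h
      rintro _ ⟨j, rfl⟩
      exact (hw j).1
    refine hv.norm_le_s4 (s := Set.range (Fin.cons (v m) (fun j : Fin (i + 1) => w j) :
      Fin (i + 2) → L)) ?_ ?_ ?_
    · rintro _ ⟨j, rfl⟩
      refine Fin.cases ?_ (fun j => ?_) j
      · exact (hv m).1
      · exact hWV (hw j).1
    · rintro _ ⟨j, rfl⟩
      refine Fin.cases ?_ (fun j => ?_) j
      · exact (hv.norm_mono hi).trans (hlow i)
      · exact hw.norm_mono (by omega)
    · rw [finrank_span_eq_card hind, Fintype.card_fin]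
      omega
end

section
/- Let V ⊆ L be a locally finite subspace. For every c ∈ L, the infinite product c·∏_{v∈V∖{0}}(1 − c/v) converges in L (as the limit of partial products over finite subsets of V∖{0} along the filter of finite subsets), the family (e_{V,n}·c^{q^n})_{n≥0} is summable, and c·∏_{v∈V∖{0}}(1 − c/v) = ∑_{n≥0} e_{V,n}·c^{q^n}. -/
/-- The coefficients `e_{V,n}`: `e_{V,0} = 1` and, for `n ≥ 1`,
`e_{V,n} = ∑_I ∏_{x ∈ I} x⁻¹`, the sum being over all finite subsets `I ⊆ V ∖ {0}` of
cardinality `q^n − 1` (the case `n = 0` is also covered since the empty set is the unique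
finite subset of cardinality `0`). -/
noncomputable def eCoeff (Fq : Type*) [Field Fq] [Fintype Fq] {L : Type*} [NormedField L]
    [Algebra Fq L] (V : Submodule Fq L) (n : ℕ) : L :=
  ∑' s : {s : Finset L // ↑s ⊆ (V : Set L) \ {0} ∧ s.card = Fintype.card Fq ^ n - 1},
    ∏ x ∈ s.1, x⁻¹

open Polynomial Filter Topology

/-! ### Linearized polynomials -/

/-- The `L`-vector space of `q`-linearized polynomials `∑ aᵢ X ^ (q ^ i)`. -/
noncomputable def qPoly (q : ℕ) (L : Type*) [Field L] : Submodule L L[X] :=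
  Submodule.span L (Set.range fun n : ℕ => (X : L[X]) ^ (q ^ n))

section Linearized

variable {Fq L : Type*} [Field Fq] [Fintype Fq] [Field L] [Algebra Fq L]

lemma sub_pow_card_pow {R : Type*} [CommRing R] [Algebra Fq R] (a b : R) (n : ℕ) :
    (a - b) ^ (Fintype.card Fq ^ n) =
      a ^ (Fintype.card Fq ^ n) - b ^ (Fintype.card Fq ^ n) := by
  induction n with
  | zero => simp
  | succ n ih =>
    rw [pow_succ, pow_mul, pow_mul, pow_mul, ih]
    exact map_sub (FiniteField.frobeniusAlgHom Fq R) _ _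

lemma qPoly_coeff {q : ℕ} {P : L[X]} (hP : P ∈ qPoly q L) {k : ℕ} (hk : ∀ n, k ≠ q ^ n) :
    P.coeff k = 0 := by
  induction hP using Submodule.span_induction with
  | mem x hx =>
    obtain ⟨n, rfl⟩ := hx
    simp [coeff_X_pow, hk n]
  | zero => simp
  | add x y _ _ hx hy => simp [hx, hy]
  | smul a x _ hx => simp [hx]

lemma qPoly_comp {P : L[X]} (hP : P ∈ qPoly (Fintype.card Fq) L) (a : L) :
    P.comp (X - C a) = P - C (P.eval a) := by
  induction hP using Submodule.span_induction with
  | mem x hx =>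
    obtain ⟨n, rfl⟩ := hx
    simp [sub_pow_card_pow (Fq := Fq)]
  | zero => simp
  | add x y _ _ hx hy => simp [hx, hy]; ring
  | smul b x _ hx => simp [hx, smul_eq_C_mul, mul_sub]

lemma qPoly_eval_smul {P : L[X]} (hP : P ∈ qPoly (Fintype.card Fq) L) (a : Fq) (v : L) :
    P.eval (a • v) = a • P.eval v := by
  induction hP using Submodule.span_induction with
  | mem x hx =>
    obtain ⟨n, rfl⟩ := hx
    simp [_root_.smul_pow, FiniteField.pow_card_pow]
  | zero => simp
  | add x y _ _ hx hy => simp [hx, hy]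
  | smul b x _ hx => simp [hx]

lemma qPoly_pow {P : L[X]} (hP : P ∈ qPoly (Fintype.card Fq) L) :
    P ^ Fintype.card Fq ∈ qPoly (Fintype.card Fq) L := by
  induction hP using Submodule.span_induction with
  | mem x hx =>
    obtain ⟨n, rfl⟩ := hx
    exact Submodule.subset_span ⟨n + 1, by simp [pow_succ, pow_mul]⟩
  | zero => simp [Fintype.card_ne_zero]
  | add x y _ _ hx hy =>
    have := map_add (FiniteField.frobeniusAlgHom Fq L[X]) x y
    simp only [FiniteField.coe_frobeniusAlgHom] at this
    rw [this]
    exact add_mem hx hy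
  | smul b x _ hx =>
    rw [_root_.smul_pow]
    exact Submodule.smul_mem _ _ hx

lemma prod_X_sub_C_univ : ∏ a : Fq, (X - C a) = X ^ Fintype.card Fq - X := by
  have h1 : 1 < Fintype.card Fq := Fintype.one_lt_card
  have hm : (X ^ Fintype.card Fq - X : Fq[X]).Monic := by
    apply monic_X_pow_sub
    rw [degree_X]
    exact_mod_cast h1
  have := prod_multiset_X_sub_C_of_monic_of_roots_card_eq hm (by
    rw [FiniteField.roots_X_pow_card_sub_X, FiniteField.X_pow_card_sub_X_natDegree_eq _ h1]
    rfl)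
  rw [FiniteField.roots_X_pow_card_sub_X] at this
  exact this

/-- The homogenized form of `∏ (X - a) = X ^ q - X`, for a nonzero constant `b`. -/
lemma prod_sub_smul (A : L[X]) {b : L} (hb : b ≠ 0) :
    ∏ a : Fq, (A - C (a • b)) =
      A ^ Fintype.card Fq - (b ^ Fintype.card Fq * b⁻¹) • A := by
  have h := congrArg (aeval (C b⁻¹ * A)) (prod_X_sub_C_univ (Fq := Fq))
  simp only [map_prod, map_sub, aeval_X, aeval_C, map_pow] at h
  have key : ∀ a : Fq, A - C (a • b) = C b * (C b⁻¹ * A - algebraMap Fq L[X] a) := by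
    intro a
    rw [mul_sub, ← mul_assoc, ← C_mul, mul_inv_cancel₀ hb, C_1, one_mul, Algebra.smul_def,
      C_mul, mul_comm (C b)]
    rfl
  simp_rw [key]
  rw [Finset.prod_mul_distrib, h, Finset.prod_const, Finset.card_univ, mul_sub, ← mul_pow,
    ← mul_assoc, ← C_mul, mul_inv_cancel₀ hb, C_1, one_mul, smul_eq_C_mul, C_mul, C_pow]
  ring

/-- Every finite-dimensional `Fq`-subspace `W` is finite and `∏_{w ∈ W} (X - w)` is linearized:
adjoining `v` to `W` replaces the polynomial `P` by
`∏_a (P - a P(v)) = P ^ q - P(v) ^ (q - 1) P`. -/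
lemma exists_finset_span (T : Finset L) :
    ∃ W : Finset L, (W : Set L) = (Submodule.span Fq (T : Set L) : Set L) ∧
      ∏ w ∈ W, (X - C w) ∈ qPoly (Fintype.card Fq) L := by
  classical
  induction T using Finset.induction_on with
  | empty =>
    refine ⟨{0}, by simp, ?_⟩
    exact Submodule.subset_span ⟨0, by simp⟩
  | insert v T _ ih =>
    obtain ⟨W, hW, hP⟩ := ih
    have hmem : ∀ x, x ∈ W ↔ x ∈ Submodule.span Fq (T : Set L) := fun x => by
      rw [← Finset.mem_coe, hW, SetLike.mem_coe]
    by_cases hv : v ∈ Submodule.span Fq (T : Set L)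
    · refine ⟨W, ?_, hP⟩
      rw [hW, Finset.coe_insert, Submodule.span_insert_eq_span hv]
    set P := ∏ w ∈ W, (X - C w) with hPdef
    have hb : P.eval v ≠ 0 := by
      rw [hPdef, eval_prod, Finset.prod_ne_zero_iff]
      intro w hw h0
      rw [eval_sub, eval_X, eval_C, sub_eq_zero] at h0
      exact hv ((hmem v).1 (h0 ▸ hw))
    refine ⟨(Finset.univ ×ˢ W).image fun p : Fq × L => p.1 • v + p.2, ?_, ?_⟩
    · ext x
      simp only [Finset.coe_image, Set.mem_image, Finset.mem_product, Finset.mem_univ,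
        true_and, Finset.coe_insert, SetLike.mem_coe, Submodule.mem_span_insert, Prod.exists, hmem]
      exact ⟨fun ⟨a, w, hw, h⟩ => ⟨a, w, hw, h.symm⟩, fun ⟨a, w, hw, h⟩ => ⟨a, w, hw, h.symm⟩⟩
    · rw [Finset.prod_image, Finset.prod_product]
      · have : ∀ a : Fq, ∏ w ∈ W, (X - C (a • v + w)) = P - C (a • P.eval v) := by
          intro a
          rw [← qPoly_eval_smul hP, ← qPoly_comp hP, hPdef, prod_comp]
          refine Finset.prod_congr rfl fun w _ => ?_
          simp [sub_sub]
        rw [Finset.prod_congr rfl fun a _ => this a, prod_sub_smul P hb]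
        exact sub_mem (qPoly_pow hP) (Submodule.smul_mem _ _ hP)
      · rintro ⟨a, w⟩ hw ⟨a', w'⟩ hw' h
        simp only [Finset.coe_product, Set.mem_prod, Finset.mem_coe, hmem] at hw hw' h
        have hd : (a - a') • v ∈ Submodule.span Fq (T : Set L) := by
          have : (a - a') • v = w' - w := by
            rw [sub_smul]
            linear_combination h
          rw [this]
          exact sub_mem hw'.2 hw.2
        have ha : a = a' := by
          by_contra hne
          exact hv ((Submodule.smul_mem_iff _ (sub_ne_zero.2 hne)).1 hd)
        subst ha
        simpa using h

/-- The sum is, up to sign, an elementary symmetric function of the inverses of `W ∖ {0}`; it is the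
coefficient of `X ^ k` in `∏ (1 - X / w)`, hence proportional to that of `X ^ (k + 1)` in
`∏_{w ∈ W} (X - w)`. -/
lemma sum_powersetCard_eq_zero {L : Type*} [Field L] [DecidableEq L] {q : ℕ} {W : Finset L}
    (h0 : 0 ∈ W) (hP : ∏ w ∈ W, (X - C w) ∈ qPoly q L) {k : ℕ} (hk : ∀ n, k + 1 ≠ q ^ n) :
    ∑ s ∈ (W.erase 0).powersetCard k, ∏ w ∈ s, (-w⁻¹) = 0 := by
  have h1 : (∏ w ∈ W.erase 0, (X - C w)).coeff k = 0 := by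
    have := qPoly_coeff hP hk
    rwa [← Finset.mul_prod_erase _ _ h0, C_0, sub_zero, coeff_X_mul] at this
  have h2 : ∏ w ∈ W.erase 0, (1 + C (-w⁻¹) * X) =
      C (∏ w ∈ W.erase 0, (-w⁻¹)) * ∏ w ∈ W.erase 0, (X - C w) := by
    rw [map_prod, ← Finset.prod_mul_distrib]
    refine Finset.prod_congr rfl fun w hw => ?_
    have hw0 : w ≠ 0 := Finset.ne_of_mem_erase hw
    rw [mul_sub, ← C_mul, neg_mul, inv_mul_cancel₀ hw0, C_neg, C_neg, C_1]
    ring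
  have h3 := congrArg (fun p => coeff p k) h2
  simp only [coeff_C_mul, h1, mul_zero, Finset.prod_one_add, finsetSum_coeff] at h3
  rw [Finset.powersetCard_eq_filter, Finset.sum_filter]
  refine Eq.trans ?_ h3
  refine Finset.sum_congr rfl fun s _ => ?_
  rw [Finset.prod_mul_distrib, Finset.prod_const, ← map_prod, coeff_C_mul, coeff_X_pow]
  simp [eq_comm]

end Linearized

/-! ### Families of finite products in a nonarchimedean field -/

section Analytic

variable {L : Type*} [NormedField L]

/-- If `f → 0` then all but finitely many finite products of values of `f` are small: a product
has norm at most `M * ‖f i‖` for each of its factors `f i`, where `M` is the product of the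
finitely many norms that are at least `1`. -/
lemma tendsto_prod_finset {ι : Type*} {f : ι → L} (hf : Tendsto f cofinite (𝓝 0)) :
    Tendsto (fun s : Finset ι => ∏ i ∈ s, f i) cofinite (𝓝 0) := by
  classical
  rw [Metric.tendsto_nhds] at hf ⊢
  simp only [dist_zero_right] at hf ⊢
  have hfin : ∀ ε > 0, {i | ε ≤ ‖f i‖}.Finite := fun ε hε => by
    simpa [Filter.eventually_cofinite] using hf ε hε
  intro ε hε
  set B := (hfin 1 one_pos).toFinset
  set M := ∏ i ∈ B, ‖f i‖
  have hB : ∀ i, i ∈ B ↔ 1 ≤ ‖f i‖ := fun i => by simp [B]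
  have hM : 1 ≤ M := Finset.one_le_prod fun i hi => (hB i).1 hi
  have bound : ∀ s : Finset ι, ∏ i ∈ s, ‖f i‖ ≤ M := by
    intro s
    rw [← Finset.prod_filter_mul_prod_filter_not s (· ∈ B)]
    refine (mul_le_of_le_one_right (Finset.prod_nonneg fun _ _ => norm_nonneg _) ?_).trans ?_
    rotate_left
    · refine Finset.prod_le_prod_of_subset_of_one_le (fun i hi => (Finset.mem_filter.1 hi).2)
        (fun _ _ => norm_nonneg _) fun i hi _ => (hB i).1 hi
    · exact Finset.prod_le_one (fun _ _ => norm_nonneg _) fun i hi => by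
        have := (Finset.mem_filter.1 hi).2
        rw [hB, not_le] at this
        exact this.le
  have hεM : 0 < ε / M := div_pos hε (by linarith)
  set A := (hfin (ε / M) hεM).toFinset
  refine (A.powerset.finite_toSet).subset fun s hs => ?_
  simp only [Finset.coe_powerset, Set.mem_preimage, Set.mem_powerset_iff, Finset.coe_subset]
  intro i hi
  by_contra hiA
  refine hs ?_
  have hi' : ‖f i‖ < ε / M := by simpa [A] using hiA
  change ‖∏ i ∈ s, f i‖ < ε
  rw [norm_prod, ← Finset.mul_prod_erase _ _ hi]
  calc ‖f i‖ * ∏ j ∈ s.erase i, ‖f j‖ ≤ ‖f i‖ * M :=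
        mul_le_mul_of_nonneg_left (bound _) (norm_nonneg _)
    _ < ε / M * M := mul_lt_mul_of_pos_right hi' (by linarith)
    _ = ε := div_mul_cancel₀ _ (by linarith)

lemma summable_prod_finset [IsUltrametricDist L] [CompleteSpace L] {ι : Type*} {f : ι → L}
    (hf : Tendsto f cofinite (𝓝 0)) : Summable fun s : Finset ι => ∏ i ∈ s, f i :=
  NonarchimedeanAddGroup.summable_of_tendsto_cofinite_zero (tendsto_prod_finset hf)

variable {Fq : Type*} [Field Fq] [Algebra Fq L]

lemma tendsto_inv_of_locallyFinite {V : Submodule Fq L} (hV : IsLocallyFiniteSubspace Fq V)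
    (c : L) : Tendsto (fun x : ↥((V : Set L) \ {0}) => c * -(x : L)⁻¹) cofinite (𝓝 0) := by
  suffices h : Tendsto (fun x : ↥((V : Set L) \ {0}) => -(x : L)⁻¹) cofinite (𝓝 0) by
    simpa only [mul_zero] using h.const_mul c
  rw [Metric.tendsto_nhds]
  intro ε hε
  have hfin := (hV ε⁻¹ (inv_pos.2 hε)).preimage
    (f := fun x : ↥((V : Set L) \ {0}) => (x : L)) Subtype.val_injective.injOn
  refine Filter.eventually_cofinite.2 (hfin.subset fun x hx => ?_)
  replace hx : ε ≤ ‖(x : L)‖⁻¹ := by simpa using hx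
  exact ⟨x.2.1, by simpa using inv_anti₀ hε hx⟩

variable [Fintype Fq]

/-- The sum over `k`-element subsets is a limit of the sums over `k`-element subsets of
`W ∖ {0}`, with `W` running over the (cofinal) finite subspaces, and those vanish when `k + 1` is
not a power of `q`. -/
lemma tsum_card_eq_zero [IsUltrametricDist L] [CompleteSpace L] {V : Submodule Fq L}
    (hV : IsLocallyFiniteSubspace Fq V) {k : ℕ} (hk : ∀ n, k + 1 ≠ Fintype.card Fq ^ n) :
    ∑' s : (Finset.card : Finset ↥((V : Set L) \ {0}) → ℕ) ⁻¹' {k},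
      ∏ x ∈ s.1, (-(x : L)⁻¹) = 0 := by
  classical
  have hS : Summable fun s : Finset ↥((V : Set L) \ {0}) => ∏ x ∈ s, (-(x : L)⁻¹) :=
    summable_prod_finset (by simpa using tendsto_inv_of_locallyFinite hV 1)
  have hS' := (hS.subtype ((Finset.card : Finset ↥((V : Set L) \ {0}) → ℕ) ⁻¹' {k})).hasSum
  replace hS' := hasSum_subtype_iff_indicator.1 hS'
  have hlim := Tendsto.comp hS' tendsto_finset_powerset_atTop_atTop
  refine isClosed_singleton.mem_of_frequently_of_tendsto (s := {(0 : L)}) ?_ hlim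
  rw [frequently_atTop]
  intro T
  obtain ⟨W, hW, hP⟩ := exists_finset_span (Fq := Fq) (T.map (Function.Embedding.subtype _))
  have hmem : ∀ x, x ∈ W ↔ x ∈ Submodule.span Fq
      ((T.map (Function.Embedding.subtype _) : Finset L) : Set L) := fun x => by
    rw [← Finset.mem_coe, hW, SetLike.mem_coe]
  have hWV : ∀ x ∈ W, x ∈ V := fun x hx => by
    refine Submodule.span_le.2 ?_ ((hmem x).1 hx)
    intro y hy
    simp only [Finset.coe_map, Set.mem_image] at hy
    obtain ⟨z, _, rfl⟩ := hy
    exact z.2.1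
  have h0 : (0 : L) ∈ W := (hmem 0).2 (zero_mem _)
  refine ⟨(W.erase 0).subtype (· ∈ (V : Set L) \ {0}), ?_, ?_⟩
  · intro x hx
    rw [Finset.mem_subtype, Finset.mem_erase]
    refine ⟨x.2.2, (hmem _).2 (Submodule.subset_span ?_)⟩
    simpa using ⟨x.2, hx⟩
  · have hz := sum_powersetCard_eq_zero h0 hP hk
    have hmap : ((W.erase 0).subtype (· ∈ (V : Set L) \ {0})).map
        (Function.Embedding.subtype _) = W.erase 0 := by
      rw [Finset.subtype_map, Finset.filter_true_of_mem]
      intro x hx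
      exact ⟨hWV x (Finset.mem_of_mem_erase hx), Finset.ne_of_mem_erase hx⟩
    rw [← hmap, Finset.powersetCard_map, Finset.sum_map] at hz
    simp only [Set.mem_singleton_iff, Function.comp_apply]
    rw [Finset.powersetCard_eq_filter, Finset.sum_filter] at hz
    refine Eq.trans ?_ hz
    refine Finset.sum_congr rfl fun s _ => ?_
    simp only [RelEmbedding.coe_toEmbedding, Finset.mapEmbedding_apply, Finset.prod_map,
      Function.Embedding.subtype_apply]
    by_cases h : s.card = k
    · rw [if_pos h]
      exact Set.indicator_of_mem (s := Finset.card ⁻¹' {k}) h _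
    · rw [if_neg h]
      exact Set.indicator_of_notMem (s := Finset.card ⁻¹' {k}) h _

/-- The product over `I` of the `-v⁻¹`, summed over `|I| = q ^ n - 1`, is `e_{V,n}`: the subsets of
the subtype `V ∖ {0}` correspond to the subsets of `L` contained in it. -/
lemma eCoeff_eq_tsum (V : Submodule Fq L) (n : ℕ) :
    ∑' s : (Finset.card : Finset ↥((V : Set L) \ {0}) → ℕ) ⁻¹' {Fintype.card Fq ^ n - 1},
      ∏ x ∈ s.1, (-(x : L)⁻¹) = eCoeff Fq V n := by
  classical
  have hq : 0 < Fintype.card Fq ^ n := pow_pos Fintype.card_pos n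
  -- the sign `(-1) ^ (q ^ n - 1)` is `1` because `a ^ q ^ n = a` on `Fq`
  have hsign : (-1 : L) ^ (Fintype.card Fq ^ n - 1) = 1 := by
    have h := congrArg (algebraMap Fq L) (FiniteField.pow_card_pow n (-1 : Fq))
    rw [map_pow, map_neg, map_one, ← Nat.sub_add_cancel hq, pow_succ] at h
    simpa using h
  let e : ((Finset.card : Finset ↥((V : Set L) \ {0}) → ℕ) ⁻¹' {Fintype.card Fq ^ n - 1}) ≃
      {s : Finset L // ↑s ⊆ (V : Set L) \ {0} ∧ s.card = Fintype.card Fq ^ n - 1} :=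
    { toFun := fun s => ⟨s.1.map (Function.Embedding.subtype _), by
        intro x hx
        simp only [Finset.coe_map, Set.mem_image] at hx
        obtain ⟨z, _, rfl⟩ := hx
        exact z.2, by rw [Finset.card_map]; exact s.2⟩
      invFun := fun s => ⟨s.1.subtype (· ∈ (V : Set L) \ {0}), by
        change (Finset.subtype _ _).card = _
        rw [Finset.card_subtype, Finset.filter_true_of_mem fun x hx => s.2.1 hx, s.2.2]⟩
      left_inv := fun s => by
        apply Subtype.ext
        refine Finset.map_injective (Function.Embedding.subtype _) ?_
        change Finset.map _ (Finset.subtype _ _) = _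
        rw [Finset.subtype_map, Finset.filter_true_of_mem]
        intro x hx
        obtain ⟨z, _, rfl⟩ := Finset.mem_map.1 hx
        exact z.2
      right_inv := fun s => by
        apply Subtype.ext
        change Finset.map _ (Finset.subtype _ _) = _
        rw [Finset.subtype_map, Finset.filter_true_of_mem fun x hx => s.2.1 hx] }
  rw [eCoeff, ← e.tsum_eq]
  refine tsum_congr fun s => ?_
  have hs : s.1.card = Fintype.card Fq ^ n - 1 := s.2
  simp only [e, Equiv.coe_fn_mk, Finset.prod_map, Function.Embedding.subtype_apply]
  rw [Finset.prod_neg, hs, hsign, one_mul]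

end Analytic

/-! ### The power series expansion of the exponential of `V` -/

/-- For a locally finite subspace `V ⊆ L` and any `c ∈ L`, the product
`c·∏_{v ∈ V∖{0}} (1 − c/v)` converges, the family `(e_{V,n} c^{q^n})` is summable, and
`c·∏_{v ∈ V∖{0}} (1 − c/v) = ∑_{n ≥ 0} e_{V,n}·c^{q^n}`. -/
theorem stmt5 {Fq L : Type*} [Field Fq] [Fintype Fq] [NormedField L] [IsUltrametricDist L]
    [CompleteSpace L] [Algebra Fq L]
    (htriv : ∀ c : Fq, c ≠ 0 → ‖algebraMap Fq L c‖ = 1)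
    (V : Submodule Fq L) (hV : IsLocallyFiniteSubspace Fq V) (c : L) :
    Multipliable (fun x : ↥((V : Set L) \ {0}) => 1 - c / (x : L)) ∧
    Summable (fun n : ℕ => eCoeff Fq V n * c ^ (Fintype.card Fq ^ n)) ∧
    c * ∏' x : ↥((V : Set L) \ {0}), (1 - c / (x : L)) =
      ∑' n : ℕ, eCoeff Fq V n * c ^ (Fintype.card Fq ^ n) := by
  have hq1 : 1 < Fintype.card Fq := Fintype.one_lt_card
  have hq : ∀ n, 0 < Fintype.card Fq ^ n := fun n => pow_pos Fintype.card_pos n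
  have hS := summable_prod_finset (tendsto_inv_of_locallyFinite hV c)
  have hfun : (fun x : ↥((V : Set L) \ {0}) => 1 - c / (x : L)) =
      (1 + (fun x : ↥((V : Set L) \ {0}) => c * -(x : L)⁻¹) ·) := by
    ext x
    rw [div_eq_mul_inv]
    ring
  rw [hfun]
  refine ⟨multipliable_one_add_of_summable_prod hS, ?_⟩
  rw [tprod_one_add hS]
  have h1 := hS.hasSum.tsum_fiberwise Finset.card
  have hterm : ∀ k : ℕ, ∑' s : (Finset.card : Finset ↥((V : Set L) \ {0}) → ℕ) ⁻¹' {k},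
      ∏ x ∈ s.1, (c * -(x : L)⁻¹) =
      (∑' s : (Finset.card : Finset ↥((V : Set L) \ {0}) → ℕ) ⁻¹' {k},
        ∏ x ∈ s.1, (-(x : L)⁻¹)) * c ^ k := by
    intro k
    rw [← tsum_mul_right]
    refine tsum_congr fun s => ?_
    have hs : s.1.card = k := s.2
    rw [Finset.prod_mul_distrib, Finset.prod_const, hs, mul_comm]
  simp_rw [hterm] at h1
  have hinj : Function.Injective fun n : ℕ => Fintype.card Fq ^ n - 1 := by
    intro m n hmn
    have hm := hq m
    have hn := hq n
    refine Nat.pow_right_injective hq1 ?_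
    simp only at hmn ⊢
    omega
  rw [← hinj.hasSum_iff] at h1
  · have h2 := h1.mul_left c
    have heq : ∀ n, c * ((∑' s : (Finset.card : Finset ↥((V : Set L) \ {0}) → ℕ) ⁻¹'
        {Fintype.card Fq ^ n - 1}, ∏ x ∈ s.1, (-(x : L)⁻¹)) * c ^ (Fintype.card Fq ^ n - 1)) =
        eCoeff Fq V n * c ^ (Fintype.card Fq ^ n) := fun n => by
      rw [eCoeff_eq_tsum, mul_left_comm, ← pow_succ', Nat.sub_add_cancel (hq n)]
    simp only [Function.comp_apply, heq] at h2
    exact ⟨h2.summable, h2.tsum_eq.symm⟩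
  · intro k hk
    rw [tsum_card_eq_zero hV, zero_mul]
    intro n hn
    exact hk ⟨n, by simp [← hn]⟩
end

section
/- Let V ⊆ L be an infinite-dimensional locally finite subspace with norm sequence (r_i)_{i≥1}. Then for every integer k ≥ 0 one has ‖e_{V,k}‖ ≤ ∏_{i=1}^{k} r_i^{q^{i−1} − q^{i}} (the empty product for k = 0 being 1). -/
/-- The span of `k` vectors has at most `q ^ k` elements; removing `0` lowers the bound by one. -/
theorem card_le_of_subset_span {Fq L : Type*} [Field Fq] [Fintype Fq] [AddCommGroup L]
    [Module Fq L] {k : ℕ} (w : Fin k → L) (t : Finset L)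
    (ht : ∀ x ∈ t, x ∈ Submodule.span Fq (Set.range w) ∧ x ≠ 0) :
    t.card ≤ Fintype.card Fq ^ k - 1 := by
  classical
  let f : (Fin k → Fq) → L := fun c => ∑ i, c i • w i
  have hsub : t ⊆ (Finset.univ.image f).erase 0 := by
    intro x hx
    obtain ⟨c, hc⟩ := (Submodule.mem_span_range_iff_exists_fun Fq).1 (ht x hx).1
    exact Finset.mem_erase.2 ⟨(ht x hx).2, Finset.mem_image.2 ⟨c, Finset.mem_univ _, hc⟩⟩
  have h0 : (0 : L) ∈ Finset.univ.image f :=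
    Finset.mem_image.2 ⟨0, Finset.mem_univ _, by simp [f]⟩
  calc t.card ≤ ((Finset.univ.image f).erase 0).card := Finset.card_le_card hsub
    _ = (Finset.univ.image f).card - 1 := Finset.card_erase_of_mem h0
    _ ≤ Fintype.card Fq ^ k - 1 := by
      gcongr
      exact Finset.card_image_le.trans (by simp)

/-- The bound for a single term of the sum defining `eCoeff`. -/
theorem prod_norm_inv_le {Fq L : Type*} [Field Fq] [Fintype Fq] [NormedField L]
    [Algebra Fq L] (V : Submodule Fq L) (v : ℕ → L) (hv : IsOrderedBasis Fq V v) (k : ℕ) :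
    ∀ s : Finset L, (↑s : Set L) ⊆ (V : Set L) \ {0} → s.card = Fintype.card Fq ^ k - 1 →
      ∏ x ∈ s, ‖x‖⁻¹ ≤ ∏ i ∈ Finset.range k,
        ‖v i‖ ^ ((Fintype.card Fq : ℤ) ^ i - (Fintype.card Fq : ℤ) ^ (i + 1)) := by
  classical
  induction k with
  | zero =>
    intro s _ hc
    have : s = ∅ := by simpa using hc
    simp [this]
  | succ k ih =>
    intro s hs hc
    set q := Fintype.card Fq with hq
    have hq0 : 0 < q := Fintype.card_pos
    have hqk : 0 < q ^ k := pow_pos hq0 k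
    have hle : q ^ k ≤ q ^ (k + 1) := Nat.pow_le_pow_right hq0 (Nat.le_succ k)
    let W := Submodule.span Fq (Set.range fun i : Fin k => v i)
    have hin : (s.filter (· ∈ W)).card ≤ q ^ k - 1 := by
      refine card_le_of_subset_span (fun i : Fin k => v i) _ fun x hx => ?_
      obtain ⟨hxs, hxW⟩ := Finset.mem_filter.1 hx
      exact ⟨hxW, (hs hxs).2⟩
    have hsplit := Finset.card_filter_add_card_filter_not (s := s) (· ∈ W)
    obtain ⟨t, hts, htc⟩ := Finset.exists_subset_card_eq
      (show q ^ (k + 1) - q ^ k ≤ (s.filter (¬ · ∈ W)).card by omega)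
    have hts' : t ⊆ s := hts.trans (Finset.filter_subset _ _)
    have hrest := ih (s \ t) (fun x hx => hs (Finset.mem_sdiff.1 hx).1)
      (by rw [Finset.card_sdiff_of_subset hts']; omega)
    have hvpos : 0 < ‖v k‖ := by
      rw [norm_pos_iff]
      intro h
      exact (hv k).2.1 (h ▸ Submodule.zero_mem _)
    have htb : ∏ x ∈ t, ‖x‖⁻¹ ≤ ‖v k‖ ^ ((q : ℤ) ^ k - (q : ℤ) ^ (k + 1)) := by
      have hexp : (q : ℤ) ^ k - (q : ℤ) ^ (k + 1) = -((q ^ (k + 1) - q ^ k : ℕ) : ℤ) := by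
        push_cast [Nat.cast_sub hle]
        ring
      rw [hexp, zpow_neg, zpow_natCast, ← inv_pow, ← htc]
      rw [← Finset.prod_const]
      refine Finset.prod_le_prod (fun _ _ => by positivity) fun x hx => ?_
      obtain ⟨hxs, hxW⟩ := Finset.mem_filter.1 (hts hx)
      exact inv_anti₀ hvpos ((hv k).2.2 x (hs hxs).1 hxW)
    rw [Finset.prod_range_succ, ← Finset.prod_sdiff hts']
    exact mul_le_mul hrest htb (Finset.prod_nonneg fun _ _ => by positivity)
      (Finset.prod_nonneg fun _ _ => by positivity)

/-- For an infinite-dimensional locally finite subspace `V ⊆ L` with norm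
sequence `(r_i)_{i ≥ 1}` (here `r_{i+1} = ‖v i‖` for an ordered basis `v`), one has
`‖e_{V,k}‖ ≤ ∏_{i = 1}^{k} r_i ^ (q^{i−1} − q^i)` for every `k ≥ 0`. -/
theorem stmt6 {Fq L : Type*} [Field Fq] [Fintype Fq] [NormedField L] [IsUltrametricDist L]
    [CompleteSpace L] [Algebra Fq L]
    (htriv : ∀ c : Fq, c ≠ 0 → ‖algebraMap Fq L c‖ = 1)
    (V : Submodule Fq L) (hV : IsLocallyFiniteSubspace Fq V) (hinf : ¬ Module.Finite Fq V)
    (v : ℕ → L) (hv : IsOrderedBasis Fq V v) (k : ℕ) :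
    ‖eCoeff Fq V k‖ ≤ ∏ i ∈ Finset.range k,
      ‖v i‖ ^ ((Fintype.card Fq : ℤ) ^ i - (Fintype.card Fq : ℤ) ^ (i + 1)) := by
  unfold eCoeff
  refine IsUltrametricDist.norm_tsum_le_of_forall_le_of_nonneg
    (Finset.prod_nonneg fun _ _ => by positivity) fun s => ?_
  simpa only [norm_prod, norm_inv] using prod_norm_inv_le V v hv k s.1 s.2.1 s.2.2
end

section
/- Let Λ ⊆ L be an infinite-dimensional locally finite subspace, let V ⊆ Λ be an F_q-subspace with dim_{F_q}(Λ/V) = 1, let β ∈ L∖{0}, and define g : L → L by g(x) := β · x · ∏_{v∈V∖{0}}(1 − x/v) (a convergent infinite product since V is locally finite). Then for every ordered basis (λ_i)_{i≥1} of Λ, setting Λ_m := span_{F_q}{λ_1,…,λ_m}, the limit lim_{m→∞} ∑_{λ∈Λ_m∖{0}} g(λ)/λ exists in L and equals −β. (In the paper this is applied with β a nonzero element of the kernel of the dual exponential of a Drinfeld module with period lattice Λ, and g = g_β the associated function, whose zero set V is an F_q-subspace of Λ of codimension 1; it yields β = −∑_{λ∈Λ∖{0}} g_β(λ)/λ.)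 -/
/-!
Fix `λ₀ ∈ Λ ∖ V`. Since `V` has codimension one, `Λ = Fq·λ₀ ⊕ V`; for large `m` we have
`λ₀ ∈ Λ_m`, hence `Λ_m = Fq·λ₀ ⊕ V_m` with `V_m = V ∩ Λ_m`. The finite products
`e_W(x) = x ∏_{w ∈ W∖0} (1 - x/w)` are `W`-periodic and `Fq`-homogeneous (the degree `|W|` is a power
of `q`), and passing to the limit gives `g(cλ₀ + v) = c g(λ₀)` for `c ∈ Fq`, `v ∈ V`.
The logarithmic derivative of `e_W` is `1/e_W`, i.e. `∑_{w ∈ W} 1/(x+w) = 1/e_W(x)`; this is the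
Lagrange interpolation of the constant `1` at the points of `-W`, all of whose nodal weights coincide
(`sum_inv_add_eq`). Consequently
`∑_{λ ∈ Λ_m∖0} g(λ)/λ = ∑_{c ≠ 0} c g(λ₀) / e_{V_m}(cλ₀) = (q-1) g(λ₀)/e_{V_m}(λ₀)
  = - g(λ₀)/e_{V_m}(λ₀)`.
As the `V_m` exhaust `V`, `e_{V_m}(λ₀) → g(λ₀)/β`. This limit is nonzero, because in an ultrametric
field the norms of the partial products of `∏ (1 - f i)`, `f → 0`, are eventually constant
(`norm_prod_eq_of_subset`), so the quotient tends to `-β`.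
-/

open Filter Topology

/-! ### Ultrametric infinite products -/

section Products

variable {L ι : Type*} [NormedField L] [IsUltrametricDist L]

lemma norm_one_sub_eq_one {a : L} (ha : ‖a‖ < 1) : ‖1 - a‖ = 1 := by
  have h : ‖(1 : L)‖ ≠ ‖-a‖ := by rw [norm_neg, norm_one]; exact ha.ne'
  rw [sub_eq_add_neg, IsUltrametricDist.norm_add_eq_max_of_norm_ne_norm h, norm_neg, norm_one,
    max_eq_left ha.le]

lemma norm_prod_one_sub_eq_one {f : ι → L} {s : Finset ι} (h : ∀ i ∈ s, ‖f i‖ < 1) :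
    ‖∏ i ∈ s, (1 - f i)‖ = 1 := by
  rw [norm_prod]
  exact Finset.prod_eq_one fun i hi => norm_one_sub_eq_one (h i hi)

lemma norm_prod_one_sub_sub_one_le {f : ι → L} {δ : ℝ} (hδ0 : 0 ≤ δ) (hδ : δ < 1) (s : Finset ι)
    (h : ∀ i ∈ s, ‖f i‖ ≤ δ) : ‖∏ i ∈ s, (1 - f i) - 1‖ ≤ δ := by
  classical
  induction s using Finset.induction_on with
  | empty => simpa using hδ0
  | insert a s ha ih =>
    have hs : ∀ i ∈ s, ‖f i‖ ≤ δ := fun i hi => h i (Finset.mem_insert_of_mem hi)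
    have hP := norm_prod_one_sub_eq_one (f := f) fun i hi => (hs i hi).trans_lt hδ
    have e : ∏ i ∈ insert a s, (1 - f i) - 1
        = (∏ i ∈ s, (1 - f i) - 1) + -(f a * ∏ i ∈ s, (1 - f i)) := by
      rw [Finset.prod_insert ha]; ring
    rw [e]
    refine (IsUltrametricDist.norm_add_le_max _ _).trans (max_le (ih hs) ?_)
    rw [norm_neg, norm_mul, hP, mul_one]
    exact h a (Finset.mem_insert_self _ _)

/-- Enlarging the index set by indices with `‖f i‖ < 1` does not change the norm of the product. -/
lemma norm_prod_eq_of_subset {f : ι → L} {s t : Finset ι} (hst : s ⊆ t)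
    (h : ∀ i, i ∉ s → ‖f i‖ < 1) : ‖∏ i ∈ t, (1 - f i)‖ = ‖∏ i ∈ s, (1 - f i)‖ := by
  classical
  rw [← Finset.prod_sdiff hst, norm_mul, norm_prod_one_sub_eq_one, one_mul]
  exact fun i hi => h i (Finset.mem_sdiff.1 hi).2

lemma exists_finset_norm_lt {L ι : Type*} [NormedField L] {f : ι → L}
    (hf : Tendsto f cofinite (𝓝 0)) {δ : ℝ} (hδ : 0 < δ) :
    ∃ s : Finset ι, ∀ i, i ∉ s → ‖f i‖ < δ := by
  have h : ∀ᶠ i in cofinite, ‖f i‖ < δ := by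
    have := hf.norm
    rw [norm_zero] at this
    exact this.eventually (gt_mem_nhds hδ)
  refine ⟨(Filter.eventually_cofinite.1 h).toFinset, fun i hi => ?_⟩
  simpa using hi

/-- In a complete ultrametric field `∏ (1 - f i)` converges unconditionally as soon as `f → 0`. -/
lemma multipliable_one_sub [CompleteSpace L] {f : ι → L} (hf : Tendsto f cofinite (𝓝 0)) :
    Multipliable fun i => 1 - f i := by
  classical
  obtain ⟨s₀, hs₀⟩ := exists_finset_norm_lt hf one_pos
  set C := ‖∏ i ∈ s₀, (1 - f i)‖ with hC
  have hC0 : 0 ≤ C := norm_nonneg _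
  have hcau : CauchySeq fun s : Finset ι => ∏ i ∈ s, (1 - f i) := by
    refine Metric.cauchySeq_iff'.2 fun ε hε => ?_
    set δ := min (1 / 2) (ε / (C + 1)) with hδ
    have hδ0 : 0 < δ := lt_min (by norm_num) (by positivity)
    have hδ1 : δ < 1 := (min_le_left _ _).trans_lt (by norm_num)
    obtain ⟨s₁, hs₁⟩ := exists_finset_norm_lt hf hδ0
    refine ⟨s₀ ∪ s₁, fun t ht => ?_⟩
    have ht' : s₀ ∪ s₁ ⊆ t := ht
    have hn : ‖∏ i ∈ s₀ ∪ s₁, (1 - f i)‖ = C := norm_prod_eq_of_subset Finset.subset_union_left hs₀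
    have hb : ‖∏ i ∈ t \ (s₀ ∪ s₁), (1 - f i) - 1‖ ≤ δ := by
      refine norm_prod_one_sub_sub_one_le hδ0.le hδ1 _ fun i hi => (hs₁ i ?_).le
      intro h
      exact (Finset.mem_sdiff.1 hi).2 (Finset.mem_union_right _ h)
    rw [dist_eq_norm, ← Finset.prod_sdiff ht']
    have e : ∀ a b : L, a * b - b = (a - 1) * b := fun a b => by ring
    rw [e, norm_mul, hn]
    calc _ ≤ δ * C := by gcongr
      _ ≤ ε / (C + 1) * C := by gcongr; exact min_le_right _ _
      _ < ε / (C + 1) * (C + 1) := by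
          have : 0 < ε / (C + 1) := by positivity
          nlinarith
      _ = ε := by field_simp
  obtain ⟨a, ha⟩ := cauchySeq_tendsto_of_complete hcau
  exact ⟨a, ha⟩

lemma tprod_one_sub_ne_zero [CompleteSpace L] {f : ι → L} (hf : Tendsto f cofinite (𝓝 0))
    (h1 : ∀ i, 1 - f i ≠ 0) : ∏' i, (1 - f i) ≠ 0 := by
  obtain ⟨s₀, hs₀⟩ := exists_finset_norm_lt hf one_pos
  have h : Tendsto (fun s : Finset ι => ∏ i ∈ s, (1 - f i)) atTop (𝓝 (∏' i, (1 - f i))) :=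
    (multipliable_one_sub hf).hasProd
  have h2 : ‖∏' i, (1 - f i)‖ = ‖∏ i ∈ s₀, (1 - f i)‖ := by
    refine tendsto_nhds_unique h.norm (tendsto_const_nhds.congr' ?_)
    filter_upwards [eventually_ge_atTop s₀] with t ht
    exact (norm_prod_eq_of_subset ht hs₀).symm
  rw [← norm_ne_zero_iff, h2, norm_ne_zero_iff]
  exact Finset.prod_ne_zero_iff.2 fun i _ => h1 i

end Products

/-! ### The exponential polynomial of a finite subspace -/

section FinExp

/-- The polynomial function `e_s(x) = x ∏_{u ∈ s ∖ {0}} (1 - x/u)`; here `s` is always the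
underlying finite set of a finite `Fq`-subspace. -/
noncomputable def finExp {L : Type*} [Field L] [DecidableEq L] (s : Finset L) (x : L) : L :=
  x * ∏ u ∈ s.erase 0, (1 - x / u)

variable {Fq L : Type*} [Field Fq] [Field L] [Algebra Fq L] [DecidableEq L]
  {W : Submodule Fq L} {s : Finset L}

lemma finExp_eq_div (hs : ∀ x, x ∈ s ↔ x ∈ W) (x : L) :
    finExp s x = (∏ w ∈ s, (x + w)) / ∏ u ∈ s.erase 0, u := by
  have h0 : (0 : L) ∈ s := (hs 0).2 W.zero_mem
  have h1 : ∏ u ∈ s.erase 0, (1 - x / u) = ∏ u ∈ s.erase 0, ((x + u) / u) := by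
    refine Finset.prod_nbij' (fun u => -u) (fun u => -u) ?_ ?_ (by simp) (by simp) ?_
    · intro u hu; simpa [hs] using hu
    · intro u hu; simpa [hs] using hu
    · intro u hu
      have : u ≠ 0 := Finset.ne_of_mem_erase hu
      field_simp
      ring
  rw [finExp, h1, Finset.prod_div_distrib, ← Finset.mul_prod_erase s _ h0, add_zero, mul_div_assoc]

lemma finExp_add (hs : ∀ x, x ∈ s ↔ x ∈ W) (x : L) {w : L} (hw : w ∈ W) :
    finExp s (x + w) = finExp s x := by
  rw [finExp_eq_div hs, finExp_eq_div hs]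
  congr 1
  refine Finset.prod_nbij' (fun u => w + u) (fun u => u - w) ?_ ?_ (by simp) (by simp) ?_
  · intro u hu; exact (hs _).2 (W.add_mem hw ((hs _).1 hu))
  · intro u hu; exact (hs _).2 (W.sub_mem ((hs _).1 hu) hw)
  · intro u _; ring

lemma finExp_smul [Fintype Fq] (hs : ∀ x, x ∈ s ↔ x ∈ W) (c : Fq) (x : L) :
    finExp s (c • x) = c • finExp s x := by
  rcases eq_or_ne c 0 with rfl | hc
  · simp [finExp]
  have hcard : s.card = Fintype.card Fq ^ Module.finrank Fq W := by
    have e : s.card = Nat.card W := by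
      rw [← Nat.card_eq_finsetCard s]
      exact Nat.card_congr (Equiv.subtypeEquivRight hs)
    have : Finite W := Finite.of_equiv s (Equiv.subtypeEquivRight hs)
    rw [e, Module.natCard_eq_pow_finrank (K := Fq), Nat.card_eq_fintype_card]
  have key : ∏ w ∈ s, (c • x + w) = c • ∏ w ∈ s, (x + w) := by
    have h1 : ∏ w ∈ s, (c • x + w) = ∏ w ∈ s, (algebraMap Fq L c * (x + w)) := by
      refine Finset.prod_nbij' (fun u => c⁻¹ • u) (fun u => c • u) ?_ ?_ ?_ ?_ ?_
      · intro u hu; exact (hs _).2 (W.smul_mem _ ((hs _).1 hu))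
      · intro u hu; exact (hs _).2 (W.smul_mem _ ((hs _).1 hu))
      · intro u _; exact smul_inv_smul₀ hc u
      · intro u _; exact inv_smul_smul₀ hc u
      · intro u _
        rw [← Algebra.smul_def, smul_add, smul_inv_smul₀ hc]
    rw [h1, Finset.prod_mul_distrib, Finset.prod_const, hcard, ← map_pow,
      FiniteField.pow_card_pow, Algebra.smul_def]
  rw [finExp_eq_div hs, finExp_eq_div hs, key, smul_div_assoc]

/-- The logarithmic derivative of `e_W` is `1 / e_W`: interpolate the constant `1` at the nodes `-w`.
By translation invariance every nodal weight is the inverse of `∏_{u ≠ 0} u`. -/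
lemma sum_inv_add_eq (hs : ∀ x, x ∈ s ↔ x ∈ W) {x : L} (hx : x ∉ W) :
    ∑ w ∈ s, (x + w)⁻¹ = (finExp s x)⁻¹ := by
  have hinj : Set.InjOn (fun w : L => -w) s := neg_injective.injOn
  have hne : s.Nonempty := ⟨0, (hs 0).2 W.zero_mem⟩
  have hxs : ∀ i ∈ s, x ≠ -i := by
    rintro i hi rfl
    exact hx (W.neg_mem ((hs i).1 hi))
  have h := Lagrange.eval_interpolate_not_at_node (r := (1 : L → L)) hxs
  rw [Lagrange.interpolate_one hinj hne, Polynomial.eval_one, Lagrange.eval_nodal] at h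
  have hw : ∀ i ∈ s, Lagrange.nodalWeight s (fun w : L => -w) i = (∏ u ∈ s.erase 0, u)⁻¹ := by
    intro i hi
    rw [Lagrange.nodalWeight, Finset.prod_inv_distrib]
    congr 1
    refine Finset.prod_nbij' (fun j => j - i) (fun u => u + i) ?_ ?_ (by simp) (by simp) ?_
    · intro j hj
      rw [Finset.mem_erase] at hj ⊢
      exact ⟨sub_ne_zero.2 hj.1, (hs _).2 (W.sub_mem ((hs _).1 hj.2) ((hs _).1 hi))⟩
    · intro u hu
      rw [Finset.mem_erase] at hu ⊢
      exact ⟨by simpa using hu.1, (hs _).2 (W.add_mem ((hs _).1 hu.2) ((hs _).1 hi))⟩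
    · intro j _; ring
  have h2 : ∑ i ∈ s, Lagrange.nodalWeight s (fun w : L => -w) i * (x - -i)⁻¹ * (1 : L → L) i
      = (∏ u ∈ s.erase 0, u)⁻¹ * ∑ w ∈ s, (x + w)⁻¹ := by
    rw [Finset.mul_sum]
    refine Finset.sum_congr rfl fun i hi => ?_
    rw [hw i hi, Pi.one_apply, mul_one, sub_neg_eq_add]
  rw [h2] at h
  refine eq_inv_of_mul_eq_one_right ?_
  rw [finExp_eq_div hs, h, div_eq_mul_inv]
  simp only [sub_neg_eq_add]
  ring

lemma finExp_ne_zero (hs : ∀ x, x ∈ s ↔ x ∈ W) {x : L} (hx : x ∉ W) : finExp s x ≠ 0 := by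
  have h0 : x ≠ 0 := by rintro rfl; exact hx W.zero_mem
  refine mul_ne_zero h0 (Finset.prod_ne_zero_iff.2 fun u hu h => hx ?_)
  have hu0 : u ≠ 0 := Finset.ne_of_mem_erase hu
  have : x = u := (div_eq_one_iff_eq hu0).1 (sub_eq_zero.1 h).symm
  rw [this]
  exact (hs u).1 (Finset.mem_of_mem_erase hu)

/-- The finite form of the theorem. Only `g(cx₀ + v) = c g(x₀)` for `v ∈ W` is used about `g`; the
`q - 1` nonzero values of `c` contribute equally, and `q - 1 = -1` in `L`. -/
lemma sum_div_eq [Fintype Fq] (hs : ∀ x, x ∈ s ↔ x ∈ W) {U : Submodule Fq L} {x₀ : L}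
    (hx₀ : x₀ ∉ W) (hU : ∀ x, x ∈ U ↔ ∃ c : Fq, ∃ v ∈ W, c • x₀ + v = x) {g : L → L}
    (hg : ∀ c : Fq, ∀ v ∈ W, g (c • x₀ + v) = c • g x₀) :
    ∑ᶠ x ∈ ((U : Set L) \ {0}), g x / x = -(g x₀ / finExp s x₀) := by
  classical
  have hinj : Set.InjOn (fun p : Fq × L => p.1 • x₀ + p.2)
      (((Finset.univ : Finset Fq) ×ˢ s : Finset (Fq × L)) : Set (Fq × L)) := by
    rintro ⟨c, v⟩ hv ⟨d, w⟩ hw h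
    simp only [Finset.coe_product, Set.mem_prod, Finset.mem_coe, hs] at hv hw h
    have h2 : (c - d) • x₀ = w - v := by
      rw [sub_smul, sub_eq_sub_iff_add_eq_add, h]; ring
    have hcd : c = d := by
      by_contra hne
      refine hx₀ ((W.smul_mem_iff (sub_ne_zero.2 hne)).1 ?_)
      rw [h2]
      exact W.sub_mem hw.2 hv.2
    subst hcd
    simpa using h
  -- the term at `0` vanishes since division by zero gives `0`
  have h1 : ∑ᶠ x ∈ ((U : Set L) \ {0}), g x / x
      = ∑ p ∈ (Finset.univ : Finset Fq) ×ˢ s, g (p.1 • x₀ + p.2) / (p.1 • x₀ + p.2) := by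
    rw [← Finset.sum_image (f := fun x => g x / x) hinj]
    refine finsum_mem_eq_sum_of_inter_support_eq _ ?_
    ext x
    simp only [Set.mem_inter_iff, Set.mem_sdiff, SetLike.mem_coe, Set.mem_singleton_iff,
      Function.mem_support, Finset.coe_image, Set.mem_image, Finset.mem_product,
      Finset.mem_univ, true_and, hs, Prod.exists, hU]
    constructor
    · rintro ⟨⟨⟨c, v, hv, rfl⟩, -⟩, h⟩
      exact ⟨⟨c, v, hv, rfl⟩, h⟩
    · rintro ⟨⟨c, v, hv, rfl⟩, h⟩
      exact ⟨⟨⟨c, v, hv, rfl⟩, fun h0 => h (by rw [h0, div_zero])⟩, h⟩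
  rw [h1, Finset.sum_product]
  have h2 : ∀ c : Fq, ∑ v ∈ s, g (c • x₀ + v) / (c • x₀ + v)
      = if c = 0 then 0 else g x₀ / finExp s x₀ := by
    intro c
    have h3 : ∑ v ∈ s, g (c • x₀ + v) / (c • x₀ + v)
        = c • g x₀ * ∑ v ∈ s, (c • x₀ + v)⁻¹ := by
      rw [Finset.mul_sum]
      exact Finset.sum_congr rfl fun v hv => by rw [hg c v ((hs v).1 hv), div_eq_mul_inv]
    rw [h3]
    split_ifs with hc
    · simp [hc]
    · have hc' : algebraMap Fq L c ≠ 0 := by simpa using hc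
      rw [sum_inv_add_eq hs (fun h => hx₀ ((W.smul_mem_iff hc).1 h)), finExp_smul hs,
        Algebra.smul_def, Algebra.smul_def]
      field_simp
  simp only [h2]
  rw [Finset.sum_ite, Finset.sum_const_zero, zero_add, Finset.sum_const, nsmul_eq_mul]
  have hcard : ((Finset.univ.filter fun c : Fq => ¬ c = 0).card : L) = -1 := by
    rw [Finset.filter_not, Finset.card_sdiff_of_subset (Finset.filter_subset _ _)]
    have : (Finset.univ.filter fun c : Fq => c = 0).card = 1 := by
      exact Finset.card_eq_one.2 ⟨0, by ext; simp⟩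
    rw [this, Finset.card_univ, Nat.cast_sub Fintype.card_pos, Nat.cast_one]
    have : ((Fintype.card Fq : ℕ) : L) = 0 := by
      rw [← map_natCast (algebraMap Fq L), FiniteField.cast_card_eq_zero, map_zero]
    rw [this, zero_sub]
  rw [hcard, neg_one_mul]

end FinExp

/-! ### Exhaustion by an ordered basis -/

/-- The vectors of an ordered basis are pairwise distinct, so by local finiteness their norms are
unbounded; minimality then forces every element of `Λ` into some `Λ_m`. -/
lemma IsOrderedBasis.exists_mem_span_s8 {Fq L : Type*} [Field Fq] [NormedField L] [Algebra Fq L]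
    {Λ : Submodule Fq L} (hΛ : IsLocallyFiniteSubspace Fq Λ) {lam : ℕ → L}
    (hlam : IsOrderedBasis Fq Λ lam) {x : L} (hx : x ∈ Λ) :
    ∃ m : ℕ, x ∈ Submodule.span Fq (Set.range fun i : Fin m => lam i) := by
  by_contra! h
  have hinj : Function.Injective lam := by
    intro a b hab
    by_contra hne
    wlog hlt : a < b generalizing a b
    · exact this hab.symm (Ne.symm hne) (lt_of_le_of_ne (not_lt.1 hlt) (Ne.symm hne))
    exact (hlam b).2.1 (Submodule.subset_span ⟨⟨a, hlt⟩, hab⟩)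
  refine Set.infinite_of_injective_forall_mem hinj (fun m => ?_) (hΛ (‖x‖ + 1) (by positivity))
  exact ⟨(hlam m).1, ((hlam m).2.2 x hx (h m)).trans (by linarith)⟩

lemma span_fin_mono (Fq : Type*) {L : Type*} [Field Fq] [AddCommGroup L] [Module Fq L]
    (lam : ℕ → L) : Monotone fun m : ℕ => Submodule.span Fq (Set.range fun i : Fin m => lam i) := by
  intro a b hab
  refine Submodule.span_mono ?_
  rintro _ ⟨i, rfl⟩
  exact ⟨⟨i, i.2.trans_le hab⟩, rfl⟩

/-- Let `Λ ⊆ L` be an infinite-dimensional locally finite subspace, `V ⊆ Λ`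
an `Fq`-subspace of codimension `1`, `β ≠ 0`, and `g x = β · x · ∏_{v ∈ V∖{0}} (1 − x/v)`.
Then for every ordered basis `(λ_i)` of `Λ`, with `Λ_m := span{λ_1, …, λ_m}`,
`lim_{m → ∞} ∑_{λ ∈ Λ_m ∖ {0}} g(λ)/λ = −β`. -/
theorem stmt8 {Fq L : Type*} [Field Fq] [Fintype Fq] [NormedField L] [IsUltrametricDist L]
    [CompleteSpace L] [Algebra Fq L]
    (htriv : ∀ c : Fq, c ≠ 0 → ‖algebraMap Fq L c‖ = 1)
    (Λ V : Submodule Fq L) (hΛ : IsLocallyFiniteSubspace Fq Λ)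
    (hinf : ¬ Module.Finite Fq Λ) (hVΛ : V ≤ Λ)
    (hcodim : Module.finrank Fq (↥Λ ⧸ Submodule.comap Λ.subtype V) = 1)
    (β : L) (hβ : β ≠ 0)
    (g : L → L) (hg : ∀ x, g x = β * x * ∏' v : ↥((V : Set L) \ {0}), (1 - x / (v : L)))
    (lam : ℕ → L) (hlam : IsOrderedBasis Fq Λ lam) :
    Tendsto
      (fun m : ℕ =>
        ∑ᶠ x ∈ ((Submodule.span Fq (Set.range fun i : Fin m => lam i) : Set L) \ {0}),
          g x / x)
      atTop (𝓝 (-β)) := by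
  classical
  set U : ℕ → Submodule Fq L := fun m => Submodule.span Fq (Set.range fun i : Fin m => lam i)
    with hU
  have hUmono : Monotone U := span_fin_mono Fq lam
  have hUΛ : ∀ m, U m ≤ Λ := fun m => Submodule.span_le.2 (by
    rintro _ ⟨i, rfl⟩; exact (hlam i).1)
  have hUex : ∀ x ∈ Λ, ∃ m, x ∈ U m := fun x hx => hlam.exists_mem_span_s8 hΛ hx
  have hUfin : ∀ m, Finite (U m) := fun m => by
    have : Module.Finite Fq (U m) := Module.Finite.span_of_finite Fq (Set.finite_range _)
    exact Module.finite_of_finite Fq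
  -- a complement `Fq·x₀` of `V` in `Λ`
  obtain ⟨x₀, hx₀Λ, hx₀V, hdec⟩ : ∃ x₀ ∈ Λ, x₀ ∉ V ∧ ∀ x ∈ Λ, ∃ c : Fq, x - c • x₀ ∈ V := by
    obtain ⟨y, hy, hspan⟩ := finrank_eq_one_iff'.1 hcodim
    obtain ⟨⟨x₀, hx₀⟩, rfl⟩ := Submodule.Quotient.mk_surjective _ y
    refine ⟨x₀, hx₀, fun h => hy ((Submodule.Quotient.mk_eq_zero _).2 h), fun x hx => ?_⟩
    obtain ⟨c, hc⟩ := hspan (Submodule.Quotient.mk ⟨x, hx⟩)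
    refine ⟨c, ?_⟩
    rw [← Submodule.Quotient.mk_smul, eq_comm, Submodule.Quotient.eq] at hc
    simpa using hc
  -- the finite subspaces `V ∩ Λ_m`
  have hWfin : ∀ m, ((V ⊓ U m : Submodule Fq L) : Set L).Finite := fun m =>
    (Set.toFinite (U m : Set L)).subset fun x hx => hx.2
  set s : ℕ → Finset L := fun m => (hWfin m).toFinset with hs_def
  have hs : ∀ m x, x ∈ s m ↔ x ∈ V ⊓ U m := fun m x => by simp [hs_def]
  -- the same finite sets, without zero, inside the index type of the infinite product
  set T : ℕ → Finset ↥((V : Set L) \ {0}) := fun m => (s m).subtype _ with hT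
  have hTtop : Tendsto T atTop atTop := by
    refine tendsto_atTop_finset_of_monotone ?_ ?_
    · intro a b hab v hv
      rw [hT, Finset.mem_subtype, hs] at hv ⊢
      exact ⟨hv.1, hUmono hab hv.2⟩
    · intro v
      obtain ⟨m, hm⟩ := hUex v (hVΛ v.2.1)
      refine ⟨m, ?_⟩
      rw [hT, Finset.mem_subtype, hs]
      exact ⟨v.2.1, hm⟩
  have hTprod : ∀ m x, x * ∏ v ∈ T m, (1 - x / (v : L)) = finExp (s m) x := by
    intro m x
    rw [finExp, hT, Finset.prod_subtype_eq_prod_filter (f := fun v => 1 - x / v)]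
    congr 2
    ext v
    simp only [Finset.mem_filter, Finset.mem_erase, hs, Set.mem_sdiff, SetLike.mem_coe,
      Set.mem_singleton_iff, Submodule.mem_inf]
    tauto
  have hf : ∀ x : L, Tendsto (fun v : ↥((V : Set L) \ {0}) => x / (v : L)) cofinite (𝓝 0) := by
    intro x
    have h1 : Tendsto (fun v : ↥((V : Set L) \ {0}) => ‖(v : L)‖) cofinite atTop := by
      refine tendsto_atTop.2 fun r => ?_
      have hfin := hΛ (max r 1) (by positivity)
      refine Set.Finite.subset (hfin.preimage Subtype.val_injective.injOn) fun v hv => ?_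
      simp only [Set.mem_compl_iff, Set.mem_ofPred_eq, not_le] at hv
      exact ⟨hVΛ v.2.1, hv.le.trans (le_max_left _ _)⟩
    rw [tendsto_zero_iff_norm_tendsto_zero]
    simp only [norm_div]
    exact h1.const_div_atTop _
  have hlim : ∀ x, Tendsto (fun m => β * finExp (s m) x) atTop (𝓝 (g x)) := by
    intro x
    have h := ((multipliable_one_sub (hf x)).hasProd : Tendsto _ _ _)
    have h2 := ((h.comp hTtop).const_mul (β * x))
    rw [hg x]
    refine h2.congr fun m => ?_
    rw [← hTprod, mul_assoc]
    rfl
  have hglin : ∀ c : Fq, ∀ v ∈ V, g (c • x₀ + v) = c • g x₀ := by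
    intro c v hv
    obtain ⟨m₀, hm₀⟩ := hUex v (hVΛ hv)
    refine tendsto_nhds_unique (hlim _) ?_
    have h := (hlim x₀).const_mul (algebraMap Fq L c)
    rw [← Algebra.smul_def] at h
    refine h.congr' ?_
    filter_upwards [eventually_ge_atTop m₀] with m hm
    rw [finExp_add (hs m) _ ⟨hv, hUmono hm hm₀⟩, finExp_smul (hs m), Algebra.smul_def]
    ring
  have hx₀0 : x₀ ≠ 0 := by rintro rfl; exact hx₀V V.zero_mem
  have hgx₀ : g x₀ ≠ 0 := by
    rw [hg]
    refine mul_ne_zero (mul_ne_zero hβ hx₀0) (tprod_one_sub_ne_zero (hf x₀) fun v h => hx₀V ?_)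
    have hv0 : (v : L) ≠ 0 := v.2.2
    have : x₀ = v := (div_eq_one_iff_eq hv0).1 (sub_eq_zero.1 h).symm
    rw [this]
    exact v.2.1
  obtain ⟨m₀, hm₀⟩ := hUex x₀ hx₀Λ
  have hmain : Tendsto (fun m => -(β * (g x₀ / (β * finExp (s m) x₀)))) atTop (𝓝 (-β)) := by
    have h := ((tendsto_const_nhds (x := g x₀)).div (hlim x₀) hgx₀).const_mul β
    rw [div_self hgx₀, mul_one] at h
    exact h.neg
  refine hmain.congr' ?_
  filter_upwards [eventually_ge_atTop m₀] with m hm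
  have hxm : x₀ ∈ U m := hUmono hm hm₀
  have hxW : x₀ ∉ V ⊓ U m := fun h => hx₀V h.1
  rw [sum_div_eq (U := U m) (hs m) hxW ?_ fun c v hv => hglin c v hv.1]
  · have := finExp_ne_zero (hs m) hxW
    field_simp
  · intro x
    constructor
    · intro hx
      obtain ⟨c, hc⟩ := hdec x (hUΛ m hx)
      exact ⟨c, x - c • x₀, ⟨hc, (U m).sub_mem hx ((U m).smul_mem c hxm)⟩, by ring⟩
    · rintro ⟨c, v, hv, rfl⟩
      exact (U m).add_mem ((U m).smul_mem c hxm) hv.2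
end
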